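/- arXiv:2203.10915 — 2 statements merged into one kernel-verified Lean document; each statement's English description precedes it below -/
import Mathlib

section
/- Let s ∈ (1,3). There is a constant C_s > 0 such that for all ξ₁ ∈ ℝ and all nonzero ξ₂ ∈ ℝ, the quantity |ξ₂|^{(s−3)/2} ∫_{−∞}^∞ e^{−2πi x ξ₁/|ξ₂|^{1/2}} |x|^{1−s/2} K_{(s−2)/4}(2πx²) dx is strictly positive and at most C_s (ξ₁⁴ + ξ₂²)^{−(3−s)/4}. -/
/-!
Write `ν = (s - 2) / 4 ∈ (-1/4, 1/4)`. The proof exhibits `|x|^{-2ν} K_ν(2πx²)` as a positive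
mixture of Gaussians, whose Fourier transform is a positive mixture of Gaussians as well.

*From the series to an integral.* Let `J_μ(y) = ∫₀^∞ u^{μ-1} e^{-u-y/u} du` (`macJ`) and
`Φ_a(w) = ∑ wⁿ / (n! Γ(n+a))` (`phiB`). For `0 < Re μ < 1` the pairs `(J_μ, J_{1-μ})`,
`(Φ_{1-μ}, -y^{1-μ} Φ_{2-μ})` and `(y^μ Φ_{1+μ}, -Φ_μ)` solve one and the same first order linear
system, and all have limits at `y = 0`. Wronskians of solutions are constant, so the connection
formula for `J_μ` follows from the values at `0` (`macJ_connection_strip`). Continuity in `μ`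
extends it to `Re μ = 0`, and the reflection `J_{-μ} = y^{-μ} J_μ` to negative real parts. The
result is `K_ν(z) = (z/2)^ν J_{-ν}(z²/4) / 2` (`besselK_eq`), where for `ν = 0` the limit defining
`K_0` is evaluated by continuity of `J` in its order.

*From one integral to another.* The functions `z ↦ J_{-ν}(z²/4)` and
`P₀(z) = ∫₁^∞ e^{-zt} (t²-1)^{ν-1/2} dt` satisfy the same second order equation, and their weighted
Wronskian is constant and tends to `0` at infinity. Hence they are proportional, with a positive
constant since both are positive (`macJ_eq_mixP`).

*Fourier transform.* By Fubini the integral in question is a positive constant times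
`G(η) = ∫₁^∞ (t²-1)^{ν-1/2} t^{-1/2} e^{-πη²/(2t)} dt` with `η = ξ₁ / |ξ₂|^{1/2}` (`fourier_mixP`).
This is positive and at most `G(0) < ∞`. Splitting at `t = 2` and comparing the tail with a Gamma
integral gives `G(η) = O(|η|^{-(1-4ν)})` (`mixG_decay`). Together, `G(η) ≤ C (1 + η⁴)^{-(1/4-ν)}`
(`mixG_bound`), which is the claim since `1/4 - ν = (3 - s)/4` and
`ξ₁⁴ + ξ₂² = |ξ₂|² (1 + η⁴)`.
-/

open Filter Set MeasureTheory
open scoped Real Classical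

/-- The modified Bessel function of the first kind
`I_ν(z) = Σ_{n=0}^∞ (z/2)^{ν+2n} / (n! Γ(n+ν+1))`, with the principal branch of powers.
(When `ν` is a negative integer the terms with `n + ν + 1 ≤ 0` vanish, since Mathlib's
`Complex.Gamma` vanishes at nonpositive integers, implementing the convention that the sum
starts at `n = -ν`.) -/
noncomputable def besselI (ν z : ℂ) : ℂ :=
  ∑' n : ℕ, (z / 2) ^ (ν + 2 * (n : ℂ)) / ((n.factorial : ℂ) * Complex.Gamma ((n : ℂ) + ν + 1))

/-- The modified Bessel function of the second kind:
`K_ν = (π / (2 sin (νπ))) (I_{-ν} - I_ν)` for non-integer `ν`, and for integer `ν` the limit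
of this expression as the order tends to `ν`. -/

noncomputable def besselK (ν z : ℂ) : ℂ :=
  if ∃ n : ℤ, ν = (n : ℂ) then
    limUnder (nhdsWithin ν {ν}ᶜ)
      (fun μ => ((Real.pi : ℂ) / (2 * Complex.sin (μ * (Real.pi : ℂ)))) *
        (besselI (-μ) z - besselI μ z))
  else ((Real.pi : ℂ) / (2 * Complex.sin (ν * (Real.pi : ℂ)))) * (besselI (-ν) z - besselI ν z)

open scoped Topology

/-! ### Macdonald's integral -/

/-- The weight `u ↦ exp (-u - y / u)`, which vanishes rapidly at both ends of `(0, ∞)`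
when `y > 0`. -/
noncomputable def macWeight (y u : ℝ) : ℂ := ((Real.exp (-u - y / u) : ℝ) : ℂ)

/-- Macdonald's integral `J_μ(y) = ∫₀^∞ u^{μ-1} exp (-u - y/u) du`; for `z > 0` one has
`K_μ(z) = (z/2)^{-μ} J_μ(z²/4) / 2`. -/
noncomputable def macJ (μ : ℂ) (y : ℝ) : ℂ := mellin (macWeight y) μ

lemma macWeight_continuousOn (y : ℝ) : ContinuousOn (macWeight y) (Ioi 0) := by
  unfold macWeight
  refine Complex.continuous_ofReal.comp_continuousOn (Real.continuous_exp.comp_continuousOn ?_)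
  exact continuousOn_id.neg.sub
    (continuousOn_const.div continuousOn_id fun x hx => (ne_of_gt hx))

lemma macWeight_locInt (y : ℝ) : LocallyIntegrableOn (macWeight y) (Ioi 0) :=
  (macWeight_continuousOn y).locallyIntegrableOn measurableSet_Ioi

lemma macWeight_norm (y u : ℝ) : ‖macWeight y u‖ = Real.exp (-u - y / u) := by
  rw [macWeight, Complex.norm_real, Real.norm_of_nonneg (Real.exp_pos _).le]

lemma macWeight_top {y : ℝ} (hy : 0 ≤ y) (a : ℝ) :
    macWeight y =O[atTop] fun x : ℝ => x ^ (-a) := by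
  have h1 : macWeight y =O[atTop] fun x : ℝ => Real.exp (-(1:ℝ) * x) := by
    refine Asymptotics.IsBigO.of_bound 1 ?_
    filter_upwards [eventually_gt_atTop 0] with x hx
    rw [macWeight_norm, Real.norm_of_nonneg (Real.exp_pos _).le, one_mul]
    apply Real.exp_le_exp.2
    have : 0 ≤ y / x := by positivity
    linarith
  exact h1.trans (isLittleO_exp_neg_mul_rpow_atTop one_pos _).isBigO

lemma macWeight_bot {y : ℝ} (hy : 0 < y) (b : ℝ) :
    macWeight y =O[𝓝[>] 0] fun x : ℝ => x ^ (-b) := by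
  have h1 : macWeight y =O[𝓝[>] 0] fun x : ℝ => Real.exp (-y * x⁻¹) := by
    refine Asymptotics.IsBigO.of_bound 1 ?_
    filter_upwards [self_mem_nhdsWithin] with x hx
    rw [macWeight_norm, Real.norm_of_nonneg (Real.exp_pos _).le, one_mul]
    apply Real.exp_le_exp.2
    have : 0 < x := hx
    rw [div_eq_mul_inv]
    linarith
  have h2 := ((isLittleO_exp_neg_mul_rpow_atTop hy b).isBigO).comp_tendsto
    tendsto_inv_nhdsGT_zero
  refine (h1.trans h2).congr' (EventuallyEq.refl _ _) ?_
  filter_upwards [self_mem_nhdsWithin] with x hx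
  have : 0 < x := hx
  simp [Real.inv_rpow this.le, Real.rpow_neg this.le]

lemma macJ_convergent {y : ℝ} (hy : 0 < y) (μ : ℂ) : MellinConvergent (macWeight y) μ :=
  mellinConvergent_of_isBigO_rpow (macWeight_locInt y) (macWeight_top hy.le (μ.re + 1))
    (by linarith) (macWeight_bot hy (μ.re - 1)) (by linarith)

lemma macJ_continuousAt {y : ℝ} (hy : 0 < y) (μ : ℂ) : ContinuousAt (fun m => macJ m y) μ :=
  (mellin_differentiableAt_of_isBigO_rpow (macWeight_locInt y) (macWeight_top hy.le (μ.re + 1))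
    (by linarith) (macWeight_bot hy (μ.re - 1)) (by linarith)).continuousAt

/-- The reflection `J_{-μ}(y) = y^{-μ} J_μ(y)`, from the substitution `u ↦ y / u`. -/
lemma macJ_neg {y : ℝ} (hy : 0 < y) (μ : ℂ) : macJ (-μ) y = (y : ℂ) ^ (-μ) * macJ μ y := by
  rw [macJ, ← mellin_comp_inv, macJ, ← smul_eq_mul, ← mellin_comp_mul_left _ _ hy]
  unfold mellin
  refine setIntegral_congr_fun measurableSet_Ioi fun t ht => ?_
  have : 0 < t := ht
  simp only
  congr 1
  simp only [macWeight]
  congr 2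
  field_simp
  ring

lemma macJ_hasDerivAt {y : ℝ} (hy : 0 < y) (μ : ℂ) :
    HasDerivAt (macJ μ) (-macJ (μ - 1) y) y := by
  have key := hasDerivAt_integral_of_dominated_loc_of_deriv_le
    (μ := volume.restrict (Ioi (0:ℝ))) (x₀ := y) (s := Ioi (y / 2))
    (F := fun (x u : ℝ) => (u : ℂ) ^ (μ - 1) • macWeight x u)
    (F' := fun (x u : ℝ) => -((u : ℂ) ^ (μ - 1 - 1) • macWeight x u))
    (bound := fun u => ‖(u : ℂ) ^ (μ - 1 - 1) • macWeight (y / 2) u‖)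
    (Ioi_mem_nhds (by linarith)) ?_ (macJ_convergent hy μ) ?_ ?_
    (macJ_convergent (half_pos hy) (μ - 1)).norm ?_
  · rw [integral_neg] at key
    exact key.2
  · filter_upwards [Ioi_mem_nhds hy] with x hx
    exact (macJ_convergent hx μ).aestronglyMeasurable
  · exact (macJ_convergent hy (μ - 1)).neg.aestronglyMeasurable
  · refine (ae_restrict_iff' measurableSet_Ioi).2 (Eventually.of_forall fun u hu x hx => ?_)
    have hu : 0 < u := hu
    have hx : y / 2 < x := hx
    rw [norm_neg, norm_smul, norm_smul, macWeight_norm, macWeight_norm]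
    gcongr
  · refine (ae_restrict_iff' measurableSet_Ioi).2 (Eventually.of_forall fun u hu x hx => ?_)
    have hu : 0 < u := hu
    have hd : HasDerivAt (fun x : ℝ => Real.exp (-u - x / u))
        (Real.exp (-u - x / u) * (-(1 / u))) x :=
      ((hasDerivAt_id x).div_const u |>.const_sub (-u)).exp
    have := (hd.ofReal_comp).const_smul ((u : ℂ) ^ (μ - 1))
    convert! this using 1
    have hu0 : (u : ℂ) ≠ 0 := by exact_mod_cast hu.ne'
    rw [Complex.cpow_sub _ _ hu0, Complex.cpow_one]
    simp [macWeight]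
    field_simp

/-- The first half of a closed first order system satisfied by `(J_μ, J_{1-μ})`. -/
lemma macJ_hasDerivAt' {y : ℝ} (hy : 0 < y) (μ : ℂ) :
    HasDerivAt (macJ μ) (-((y : ℂ) ^ (μ - 1) * macJ (1 - μ) y)) y := by
  have := macJ_hasDerivAt hy μ
  rwa [show μ - 1 = -(1 - μ) by ring, macJ_neg hy, show -(1 - μ) = μ - 1 by ring] at this

lemma macJ_tendsto_zero {μ : ℂ} (hμ : 0 < μ.re) :
    Tendsto (macJ μ) (𝓝[>] 0) (𝓝 (Complex.Gamma μ)) := by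
  rw [Complex.Gamma_eq_integral hμ, Complex.GammaIntegral]
  unfold macJ mellin
  refine tendsto_integral_filter_of_dominated_convergence
    (fun u : ℝ => ‖(Real.exp (-u) : ℂ) * (u : ℂ) ^ (μ - 1)‖) ?_ ?_
    (Complex.GammaIntegral_convergent hμ).norm ?_
  · filter_upwards [self_mem_nhdsWithin] with x hx
    exact (macJ_convergent hx μ).aestronglyMeasurable
  · filter_upwards [self_mem_nhdsWithin] with x hx
    refine (ae_restrict_iff' measurableSet_Ioi).2 (Eventually.of_forall fun u hu => ?_)
    have hu : 0 < u := hu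
    have hx : 0 < x := hx
    rw [norm_smul, norm_mul, macWeight_norm, mul_comm, Complex.norm_real,
      Real.norm_of_nonneg (Real.exp_pos _).le]
    gcongr
    have : 0 < x / u := by positivity
    linarith
  · refine (ae_restrict_iff' measurableSet_Ioi).2 (Eventually.of_forall fun u hu => ?_)
    have hu : 0 < u := hu
    have hc : Continuous fun x : ℝ => (u : ℂ) ^ (μ - 1) • macWeight x u := by
      unfold macWeight
      fun_prop
    have := hc.tendsto 0
    simp only [macWeight, zero_div, sub_zero, smul_eq_mul] at this
    rw [mul_comm] at this
    exact tendsto_nhdsWithin_of_tendsto_nhds this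

/-! ### The entire functions `Φ_a` -/

/-- The entire function `Φ_a(w) = ∑ wⁿ / (n! Γ(n + a))`, so that
`I_ν(z) = (z/2)^ν Φ_{ν+1}(z²/4)`. -/
noncomputable def phiB (a w : ℂ) : ℂ :=
  ∑' n : ℕ, w ^ n / ((n.factorial : ℂ) * Complex.Gamma ((n : ℂ) + a))

lemma inv_Gamma_bound {a : ℂ} {r : ℝ} (hr : 0 < r) (ha : r ≤ a.re) (n : ℕ) :
    ‖(Complex.Gamma ((n : ℂ) + a))⁻¹‖ ≤ ‖(Complex.Gamma a)⁻¹‖ * r⁻¹ ^ n := by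
  induction n with
  | zero => simp
  | succ n ih =>
    have h := Complex.one_div_Gamma_eq_self_mul_one_div_Gamma_add_one ((n : ℂ) + a)
    have hre : r ≤ ‖(n : ℂ) + a‖ := by
      refine le_trans ?_ (Complex.re_le_norm _)
      have : (0:ℝ) ≤ n := n.cast_nonneg
      simp
      linarith
    have h2 : ‖(Complex.Gamma ((n : ℂ) + a))⁻¹‖
        = ‖(n : ℂ) + a‖ * ‖(Complex.Gamma ((n : ℂ) + a + 1))⁻¹‖ := by
      rw [← norm_mul, ← h]
    have h3 : r * ‖(Complex.Gamma ((n : ℂ) + a + 1))⁻¹‖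
        ≤ ‖(Complex.Gamma a)⁻¹‖ * r⁻¹ ^ n := by
      refine le_trans ?_ ih
      rw [h2]
      gcongr
    have h4 : ((n + 1 : ℕ) : ℂ) + a = (n : ℂ) + a + 1 := by push_cast; ring
    rw [h4, pow_succ, ← mul_assoc, ← div_eq_mul_inv, le_div_iff₀ hr, mul_comm]
    exact h3

lemma phiB_term_bound {a : ℂ} {r : ℝ} (hr : 0 < r) (ha : r ≤ a.re) (w : ℂ) (n : ℕ) :
    ‖w ^ n / ((n.factorial : ℂ) * Complex.Gamma ((n : ℂ) + a))‖
      ≤ ‖(Complex.Gamma a)⁻¹‖ * ((‖w‖ * r⁻¹) ^ n / n.factorial) := by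
  have h := inv_Gamma_bound hr ha n
  rw [div_eq_mul_inv, mul_inv, norm_mul, norm_mul, norm_pow, norm_inv, Complex.norm_natCast,
    mul_pow]
  calc ‖w‖ ^ n * ((n.factorial : ℝ)⁻¹ * ‖(Complex.Gamma ((n : ℂ) + a))⁻¹‖)
      ≤ ‖w‖ ^ n * ((n.factorial : ℝ)⁻¹ * (‖(Complex.Gamma a)⁻¹‖ * r⁻¹ ^ n)) := by gcongr
    _ = _ := by ring

lemma phiB_summable {a : ℂ} (ha : 0 < a.re) (w : ℂ) :
    Summable fun n : ℕ => w ^ n / ((n.factorial : ℂ) * Complex.Gamma ((n : ℂ) + a)) :=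
  .of_norm_bounded ((Real.summable_pow_div_factorial (‖w‖ * a.re⁻¹)).mul_left _)
    (phiB_term_bound ha le_rfl w)

lemma phiB_zero (a : ℂ) : phiB a 0 = (Complex.Gamma a)⁻¹ := by
  rw [phiB, tsum_eq_single 0]
  · simp
  · intro n hn
    simp [hn]

lemma phiB_shift {a : ℂ} (ha : 0 < a.re) (w : ℂ) :
    ∑' n : ℕ, (n : ℂ) * w ^ (n - 1) / ((n.factorial : ℂ) * Complex.Gamma ((n : ℂ) + a))
      = phiB (a + 1) w ∧
    Summable fun n : ℕ =>
      (n : ℂ) * w ^ (n - 1) / ((n.factorial : ℂ) * Complex.Gamma ((n : ℂ) + a)) := by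
  have hterm : ∀ n : ℕ, ((n + 1 : ℕ) : ℂ) * w ^ (n + 1 - 1) /
      (((n + 1).factorial : ℂ) * Complex.Gamma (((n + 1 : ℕ) : ℂ) + a))
      = w ^ n / ((n.factorial : ℂ) * Complex.Gamma ((n : ℂ) + (a + 1))) := by
    intro n
    have h1 : ((n + 1 : ℕ) : ℂ) ≠ 0 := by exact_mod_cast n.succ_ne_zero
    rw [Nat.factorial_succ, Nat.add_sub_cancel, Nat.cast_mul, mul_assoc,
      mul_div_mul_left _ _ h1]
    congr 3
    push_cast
    ring
  have hs : Summable fun n : ℕ =>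
      (n : ℂ) * w ^ (n - 1) / ((n.factorial : ℂ) * Complex.Gamma ((n : ℂ) + a)) := by
    rw [← summable_nat_add_iff 1]
    refine (phiB_summable (a := a + 1) (by simp; linarith) w).congr fun n => ?_
    exact (hterm n).symm
  refine ⟨?_, hs⟩
  rw [hs.tsum_eq_zero_add, phiB]
  simp only [hterm]
  simp

lemma phiB_hasDerivAt {a : ℂ} (ha : 0 < a.re) (w : ℂ) :
    HasDerivAt (phiB a) (phiB (a + 1) w) w := by
  set R : ℝ := ‖w‖ + 1
  have hR : 0 < R := by positivity
  rw [← (phiB_shift ha w).1]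
  refine hasDerivAt_tsum_of_isPreconnected (t := Metric.ball (0 : ℂ) R) (y₀ := 0)
    (u := fun n : ℕ => ‖(n : ℂ) * (R : ℂ) ^ (n - 1) /
      ((n.factorial : ℂ) * Complex.Gamma ((n : ℂ) + a))‖)
    (g := fun (n : ℕ) w => w ^ n / ((n.factorial : ℂ) * Complex.Gamma ((n : ℂ) + a)))
    (g' := fun (n : ℕ) w => (n : ℂ) * w ^ (n - 1) /
      ((n.factorial : ℂ) * Complex.Gamma ((n : ℂ) + a)))
    (phiB_shift ha R).2.norm Metric.isOpen_ball (convex_ball _ _).isPreconnected ?_ ?_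
    (by simpa using hR) (phiB_summable ha 0) (by simp [R])
  · intro n y _
    exact (hasDerivAt_pow n y).div_const _
  · intro n y hy
    have hy : ‖y‖ < R := by simpa using hy
    simp only [norm_div, norm_mul, norm_pow, Complex.norm_real, Real.norm_of_nonneg hR.le]
    gcongr

lemma phiB_contig {a : ℂ} (ha : 0 < a.re) (w : ℂ) :
    a * phiB (a + 1) w + w * phiB (a + 2) w = phiB a w := by
  have ha1 : 0 < (a + 1).re := by simp; linarith
  have h2 := phiB_shift ha1 w
  rw [show a + 2 = a + 1 + 1 by ring, ← h2.1, phiB, phiB, ← tsum_mul_left, ← tsum_mul_left,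
    ← ((phiB_summable ha1 w).mul_left a).tsum_add (h2.2.mul_left w)]
  refine tsum_congr fun n => ?_
  have h := Complex.one_div_Gamma_eq_self_mul_one_div_Gamma_add_one ((n : ℂ) + a)
  have hw : w * ((n : ℂ) * w ^ (n - 1)) = n * w ^ n := by
    cases n with
    | zero => simp
    | succ n => simp [pow_succ]; ring
  rw [← mul_div_assoc w, hw]
  simp only [div_eq_mul_inv, mul_inv]
  rw [h, add_assoc]
  ring

lemma phiB_real_hasDerivAt {a : ℂ} (ha : 0 < a.re) (y : ℝ) :
    HasDerivAt (fun y : ℝ => phiB a y) (phiB (a + 1) y) y :=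
  (phiB_hasDerivAt ha y).comp_ofReal

lemma phiB_pow_hasDerivAt {a : ℂ} (ha : 0 < a.re) {y : ℝ} (hy : 0 < y) :
    HasDerivAt (fun y : ℝ => (y : ℂ) ^ a * phiB (a + 1) y) ((y : ℂ) ^ (a - 1) * phiB a y) y := by
  have ha1 : 0 < (a + 1).re := by simp; linarith
  have hy0 : (y : ℂ) ≠ 0 := by exact_mod_cast hy.ne'
  have ha0 : a ≠ 0 := by rintro rfl; simp at ha
  have hp : HasDerivAt (fun w : ℂ => w ^ a) (a * (y : ℂ) ^ (a - 1)) (y : ℂ) := by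
    simpa using (hasDerivAt_id (y : ℂ)).cpow_const (c := a) (by simp [hy])
  have := hp.comp_ofReal.mul (phiB_real_hasDerivAt ha1 y)
  convert! this using 1
  rw [← phiB_contig ha, Complex.cpow_sub _ _ hy0, Complex.cpow_one,
    show a + 2 = a + 1 + 1 by ring]
  field_simp

lemma phiB_continuousAt_param {a : ℂ} (ha : 0 < a.re) (w : ℂ) :
    ContinuousAt (fun a => phiB a w) a := by
  have hc : Continuous fun a : ℂ => (Complex.Gamma a)⁻¹ :=
    Complex.differentiable_one_div_Gamma.continuous
  have hopen : IsOpen {b : ℂ | a.re / 2 < b.re ∧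
      ‖(Complex.Gamma b)⁻¹‖ < ‖(Complex.Gamma a)⁻¹‖ + 1} :=
    (isOpen_lt continuous_const Complex.continuous_re).inter
      (isOpen_lt hc.norm continuous_const)
  refine ContinuousOn.continuousAt (s := {b : ℂ | a.re / 2 < b.re ∧
      ‖(Complex.Gamma b)⁻¹‖ < ‖(Complex.Gamma a)⁻¹‖ + 1}) ?_
    (hopen.mem_nhds ⟨by linarith, by linarith⟩)
  unfold phiB
  refine continuousOn_tsum (u := fun n : ℕ => (‖(Complex.Gamma a)⁻¹‖ + 1) *
    ((‖w‖ * (a.re / 2)⁻¹) ^ n / n.factorial)) ?_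
    ((Real.summable_pow_div_factorial _).mul_left _) ?_
  · intro n
    have : Continuous fun b : ℂ => w ^ n * ((n.factorial : ℂ)⁻¹ *
        (Complex.Gamma ((n : ℂ) + b))⁻¹) :=
      continuous_const.mul (continuous_const.mul (hc.comp (continuous_const.add continuous_id)))
    simpa only [div_eq_mul_inv, mul_inv] using this.continuousOn
  · intro n b hb
    refine (phiB_term_bound (half_pos ha) hb.1.le w n).trans ?_
    have := hb.2.le
    gcongr

lemma besselI_eq (ν : ℂ) {z : ℝ} (hz : 0 < z) :
    besselI ν z = ((z / 2 : ℝ) : ℂ) ^ ν * phiB (1 + ν) ((z ^ 2 / 4 : ℝ) : ℂ) := by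
  have hz0 : ((z / 2 : ℝ) : ℂ) ≠ 0 := by exact_mod_cast (half_pos hz).ne'
  rw [besselI, phiB, ← tsum_mul_left]
  refine tsum_congr fun n => ?_
  rw [show (z : ℂ) / 2 = ((z / 2 : ℝ) : ℂ) by push_cast; rfl, Complex.cpow_add _ _ hz0,
    show (2 * (n : ℂ)) = ((2 * n : ℕ) : ℂ) by push_cast; rfl, Complex.cpow_natCast, pow_mul,
    mul_div_assoc, show (n : ℂ) + ν + 1 = n + (1 + ν) by ring]
  congr 3
  push_cast
  ring

/-! ### Integral representation of `K_ν` -/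

lemma eq_of_deriv_zero_Ioi {f : ℝ → ℂ} (hf : ∀ y : ℝ, 0 < y → HasDerivAt f 0 y) {x y : ℝ}
    (hx : 0 < x) (hy : 0 < y) : f x = f y :=
  isOpen_Ioi.is_const_of_deriv_eq_zero isPreconnected_Ioi
    (fun y hy => (hf y hy).differentiableAt.differentiableWithinAt)
    (fun y hy => (hf y hy).deriv) hx hy

lemma eq_lim_of_deriv_zero {f : ℝ → ℂ} {c : ℂ} (hf : ∀ y : ℝ, 0 < y → HasDerivAt f 0 y)
    (hc : Tendsto f (𝓝[>] 0) (𝓝 c)) {y : ℝ} (hy : 0 < y) : f y = c := by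
  refine tendsto_nhds_unique (tendsto_const_nhds.congr' ?_) hc
  filter_upwards [self_mem_nhdsWithin] with x hx
  exact eq_of_deriv_zero_Ioi hf hy hx

/-- For two solutions of the system `f' = -y^{μ-1} g`, `g' = -y^{-μ} f` the Wronskian
`f₁ g₂ - f₂ g₁` is constant, hence equal to its limit at `0`. -/
lemma wronskian_eq {μ : ℂ} {f₁ g₁ f₂ g₂ : ℝ → ℂ} {a₁ b₁ a₂ b₂ : ℂ}
    (hf₁ : ∀ y : ℝ, 0 < y → HasDerivAt f₁ (-((y : ℂ) ^ (μ - 1) * g₁ y)) y)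
    (hg₁ : ∀ y : ℝ, 0 < y → HasDerivAt g₁ (-((y : ℂ) ^ (-μ) * f₁ y)) y)
    (hf₂ : ∀ y : ℝ, 0 < y → HasDerivAt f₂ (-((y : ℂ) ^ (μ - 1) * g₂ y)) y)
    (hg₂ : ∀ y : ℝ, 0 < y → HasDerivAt g₂ (-((y : ℂ) ^ (-μ) * f₂ y)) y)
    (ha₁ : Tendsto f₁ (𝓝[>] 0) (𝓝 a₁)) (hb₁ : Tendsto g₁ (𝓝[>] 0) (𝓝 b₁))
    (ha₂ : Tendsto f₂ (𝓝[>] 0) (𝓝 a₂)) (hb₂ : Tendsto g₂ (𝓝[>] 0) (𝓝 b₂))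
    {y : ℝ} (hy : 0 < y) : f₁ y * g₂ y - f₂ y * g₁ y = a₁ * b₂ - a₂ * b₁ := by
  refine eq_lim_of_deriv_zero (f := fun y => f₁ y * g₂ y - f₂ y * g₁ y) (fun y hy => ?_)
    ((ha₁.mul hb₂).sub (ha₂.mul hb₁)) hy
  have := ((hf₁ y hy).mul (hg₂ y hy)).sub ((hf₂ y hy).mul (hg₁ y hy))
  convert! this using 1
  ring

/-- The connection formula in the strip `0 < Re μ < 1`. The pairs `(J_μ, J_{1-μ})`,
`(y^μ Φ_{1+μ}, -Φ_μ)` and `(Φ_{1-μ}, -y^{1-μ} Φ_{2-μ})` solve the same first order system, so all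
three Wronskians are read off at `y = 0`, and Cramer's rule gives `J_μ`. -/
lemma macJ_connection_strip {μ : ℂ} (h0 : 0 < μ.re) (h1 : μ.re < 1) {y : ℝ} (hy : 0 < y) :
    Complex.sin (π * μ) * macJ μ y
      = π * (phiB (1 - μ) y - (y : ℂ) ^ μ * phiB (1 + μ) y) := by
  have h1' : 0 < (1 - μ).re := by simp; linarith
  have lim : ∀ a : ℂ, 0 < a.re → Tendsto (fun y : ℝ => phiB a y) (𝓝[>] 0)
      (𝓝 (Complex.Gamma a)⁻¹) := by
    intro a ha
    have := (phiB_real_hasDerivAt ha 0).continuousAt.tendsto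
    rw [Complex.ofReal_zero, phiB_zero] at this
    exact tendsto_nhdsWithin_of_tendsto_nhds this
  have limp : ∀ a : ℂ, 0 < a.re → Tendsto (fun y : ℝ => (y : ℂ) ^ a * phiB (a + 1) y) (𝓝[>] 0)
      (𝓝 0) := by
    intro a ha
    have h := (Complex.continuousAt_ofReal_cpow_const 0 a (Or.inl ha)).tendsto
    have ha0 : a ≠ 0 := by rintro rfl; simp at ha
    rw [Complex.ofReal_zero, Complex.zero_cpow ha0] at h
    have := (tendsto_nhdsWithin_of_tendsto_nhds h).mul (lim (a + 1) (by simp; linarith))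
    rwa [zero_mul] at this
  have hJ : ∀ y : ℝ, 0 < y → HasDerivAt (macJ μ) (-((y : ℂ) ^ (μ - 1) * macJ (1 - μ) y)) y :=
    fun y hy => macJ_hasDerivAt' hy μ
  have hJ' : ∀ y : ℝ, 0 < y → HasDerivAt (macJ (1 - μ)) (-((y : ℂ) ^ (-μ) * macJ μ y)) y := by
    intro y hy
    have := macJ_hasDerivAt' hy (1 - μ)
    rwa [show 1 - μ - 1 = -μ by ring, show 1 - (1 - μ) = μ by ring] at this
  have hA : ∀ y : ℝ, 0 < y → HasDerivAt (fun y : ℝ => (y : ℂ) ^ μ * phiB (μ + 1) y)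
      (-((y : ℂ) ^ (μ - 1) * (-phiB μ y))) y := by
    intro y hy
    convert! phiB_pow_hasDerivAt h0 hy using 1
    ring
  have hA' : ∀ y : ℝ, 0 < y → HasDerivAt (fun y : ℝ => -phiB μ y)
      (-((y : ℂ) ^ (-μ) * ((y : ℂ) ^ μ * phiB (μ + 1) y))) y := by
    intro y hy
    have hy0 : (y : ℂ) ≠ 0 := by exact_mod_cast (ne_of_gt hy)
    convert! (phiB_real_hasDerivAt h0 y).neg using 1
    rw [← mul_assoc, ← Complex.cpow_add _ _ hy0, neg_add_cancel, Complex.cpow_zero, one_mul]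
  have hB : ∀ y : ℝ, 0 < y → HasDerivAt (fun y : ℝ => phiB (1 - μ) y)
      (-((y : ℂ) ^ (μ - 1) * (-((y : ℂ) ^ (1 - μ) * phiB (1 - μ + 1) y)))) y := by
    intro y hy
    have hy0 : (y : ℂ) ≠ 0 := by exact_mod_cast (ne_of_gt hy)
    convert! phiB_real_hasDerivAt h1' y using 1
    rw [mul_neg, neg_neg, ← mul_assoc, ← Complex.cpow_add _ _ hy0,
      show μ - 1 + (1 - μ) = 0 by ring, Complex.cpow_zero, one_mul]
  have hB' : ∀ y : ℝ, 0 < y → HasDerivAt (fun y : ℝ => -((y : ℂ) ^ (1 - μ) * phiB (1 - μ + 1) y))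
      (-((y : ℂ) ^ (-μ) * phiB (1 - μ) y)) y := by
    intro y hy
    convert! (phiB_pow_hasDerivAt h1' hy).neg using 1
    rw [show 1 - μ - 1 = -μ by ring]
  have wJA := wronskian_eq hJ hJ' hA hA' (macJ_tendsto_zero h0) (macJ_tendsto_zero h1')
    (limp μ h0) (lim μ h0).neg hy
  have wJB := wronskian_eq hJ hJ' hB hB' (macJ_tendsto_zero h0) (macJ_tendsto_zero h1')
    (lim _ h1') (limp _ h1').neg hy
  have wAB := wronskian_eq hA hA' hB hB' (limp μ h0) (lim μ h0).neg
    (lim _ h1') (limp _ h1').neg hy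
  have g0 : Complex.Gamma μ ≠ 0 := Complex.Gamma_ne_zero_of_re_pos h0
  have g1 : Complex.Gamma (1 - μ) ≠ 0 := Complex.Gamma_ne_zero_of_re_pos h1'
  have hsin : Complex.sin (π * μ) ≠ 0 := by
    intro hs
    have := Complex.Gamma_mul_Gamma_one_sub μ
    rw [hs, div_zero] at this
    exact mul_ne_zero g0 g1 this
  have hpi : (π : ℂ) ≠ 0 := by exact_mod_cast Real.pi_ne_zero
  have gg : (Complex.Gamma μ)⁻¹ * (Complex.Gamma (1 - μ))⁻¹ = Complex.sin (π * μ) / π := by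
    rw [← mul_inv, Complex.Gamma_mul_Gamma_one_sub, inv_div]
  simp only [mul_neg, zero_mul, sub_zero, neg_zero, mul_zero, zero_sub, neg_neg,
    mul_inv_cancel₀ g0, inv_mul_cancel₀ g1] at wJA wJB wAB
  rw [mul_comm (Complex.Gamma (1 - μ))⁻¹, gg] at wAB
  have key : Complex.sin (π * μ) / π * macJ μ y
      = phiB (1 - μ) y - (y : ℂ) ^ μ * phiB (μ + 1) y := by
    linear_combination (-macJ μ y) * wAB + (y : ℂ) ^ μ * phiB (μ + 1) y * wJB
      - phiB (1 - μ) y * wJA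
  rw [add_comm 1 μ, ← key]
  field_simp

lemma macJ_connection {μ : ℂ} (h0 : 0 ≤ μ.re) (h1 : μ.re < 1) {y : ℝ} (hy : 0 < y) :
    Complex.sin (π * μ) * macJ μ y
      = π * (phiB (1 - μ) y - (y : ℂ) ^ μ * phiB (1 + μ) y) := by
  have hy0 : (y : ℂ) ≠ 0 := by exact_mod_cast hy.ne'
  have hε : Tendsto (fun ε : ℝ => μ + ε) (𝓝[>] 0) (𝓝 μ) := by
    have : Continuous fun ε : ℝ => μ + ε := by fun_prop
    simpa using tendsto_nhdsWithin_of_tendsto_nhds (this.tendsto 0)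
  have hc1 : ContinuousAt (fun m : ℂ => Complex.sin (π * m) * macJ m y) μ :=
    (by fun_prop : Continuous fun m : ℂ => Complex.sin (π * m)).continuousAt.mul
      (macJ_continuousAt hy μ)
  have hc2 : ContinuousAt
      (fun m : ℂ => π * (phiB (1 - m) y - (y : ℂ) ^ m * phiB (1 + m) y)) μ := by
    refine continuousAt_const.mul (ContinuousAt.sub ?_ (ContinuousAt.mul ?_ ?_))
    · exact ContinuousAt.comp (f := fun m : ℂ => 1 - m) (g := fun a => phiB a y)
        (phiB_continuousAt_param (by simp; linarith) _) (by fun_prop)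
    · exact continuousAt_const_cpow hy0
    · exact ContinuousAt.comp (f := fun m : ℂ => 1 + m) (g := fun a => phiB a y)
        (phiB_continuousAt_param (by simp; linarith) _) (by fun_prop)
  refine tendsto_nhds_unique (hc1.tendsto.comp hε) ((hc2.tendsto.comp hε).congr' ?_)
  filter_upwards [self_mem_nhdsWithin,
    mem_nhdsWithin_of_mem_nhds (Iio_mem_nhds (show (0:ℝ) < 1 - μ.re by linarith))] with ε e0 e1
  have e0 : 0 < ε := e0
  have e1 : ε < 1 - μ.re := e1
  exact (macJ_connection_strip (by simp; linarith) (by simp; linarith) hy).symm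

/-- The expression defining `K_μ` at non-integer order. -/
noncomputable def besselKGen (μ z : ℂ) : ℂ :=
  ((Real.pi : ℂ) / (2 * Complex.sin (μ * (Real.pi : ℂ)))) * (besselI (-μ) z - besselI μ z)

lemma besselKGen_neg (μ z : ℂ) : besselKGen (-μ) z = besselKGen μ z := by
  simp only [besselKGen, neg_mul, Complex.sin_neg, neg_neg, mul_neg, div_neg]
  ring

lemma half_cpow_sq {z : ℝ} (hz : 0 < z) (μ : ℂ) :
    ((z ^ 2 / 4 : ℝ) : ℂ) ^ μ = ((z / 2 : ℝ) : ℂ) ^ μ * ((z / 2 : ℝ) : ℂ) ^ μ := by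
  rw [← Complex.mul_cpow_ofReal_nonneg (by positivity) (by positivity)]
  congr 1
  push_cast
  ring

lemma besselKGen_eq_aux {μ : ℂ} (h0 : 0 ≤ μ.re) (h1 : μ.re < 1)
    (hsin : Complex.sin (π * μ) ≠ 0) {z : ℝ} (hz : 0 < z) :
    besselKGen μ z = 1 / 2 * ((z / 2 : ℝ) : ℂ) ^ (-μ) * macJ μ (z ^ 2 / 4) := by
  have hz0 : ((z / 2 : ℝ) : ℂ) ≠ 0 := by exact_mod_cast (half_pos hz).ne'
  have h := macJ_connection h0 h1 (y := z ^ 2 / 4) (by positivity)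
  rw [half_cpow_sq hz] at h
  have hc : ((z / 2 : ℝ) : ℂ) ^ (-μ) * ((z / 2 : ℝ) : ℂ) ^ μ = 1 := by
    rw [← Complex.cpow_add _ _ hz0, neg_add_cancel, Complex.cpow_zero]
  rw [besselKGen, besselI_eq _ hz, besselI_eq _ hz, mul_comm μ, ← sub_eq_add_neg]
  field_simp
  linear_combination (-((z / 2 : ℝ) : ℂ) ^ (-μ)) * h +
    (π * ((z / 2 : ℝ) : ℂ) ^ μ * phiB (1 + μ) ((z ^ 2 / 4 : ℝ) : ℂ)) * hc

lemma besselKGen_eq {μ : ℂ} (h0 : |μ.re| < 1)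
    (hsin : Complex.sin (π * μ) ≠ 0) {z : ℝ} (hz : 0 < z) :
    besselKGen μ z = 1 / 2 * ((z / 2 : ℝ) : ℂ) ^ (-μ) * macJ μ (z ^ 2 / 4) := by
  rw [abs_lt] at h0
  rcases le_total 0 μ.re with h | h
  · exact besselKGen_eq_aux h h0.2 hsin hz
  · have hz0 : ((z / 2 : ℝ) : ℂ) ≠ 0 := by exact_mod_cast (half_pos hz).ne'
    have hc : ((z / 2 : ℝ) : ℂ) ^ (-μ) * ((z / 2 : ℝ) : ℂ) ^ μ = 1 := by
      rw [← Complex.cpow_add _ _ hz0, neg_add_cancel, Complex.cpow_zero]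
    rw [← besselKGen_neg, besselKGen_eq_aux (by simpa using h) (by simp; linarith)
      (by simpa using hsin) hz, macJ_neg (by positivity), half_cpow_sq hz, neg_neg]
    linear_combination (1 / 2 * ((z / 2 : ℝ) : ℂ) ^ (-μ) * macJ μ (z ^ 2 / 4)) * hc

/-- Macdonald's integral representation
`K_ν(z) = (z/2)^ν J_{-ν}(z²/4) / 2` for real `|ν| < 1`, including the limiting case `ν = 0`. -/
lemma besselK_eq {ν : ℝ} (hν : |ν| < 1) {z : ℝ} (hz : 0 < z) :
    besselK ν z = 1 / 2 * ((z / 2 : ℝ) : ℂ) ^ (ν : ℂ) * macJ (-ν) (z ^ 2 / 4) := by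
  have hz0 : ((z / 2 : ℝ) : ℂ) ≠ 0 := by exact_mod_cast (half_pos hz).ne'
  have hsin : ∀ μ : ℂ, ‖μ‖ < 1 → μ ≠ 0 → Complex.sin (π * μ) ≠ 0 := by
    intro μ hμ hμ0 hs
    obtain ⟨k, hk⟩ := Complex.sin_eq_zero_iff.1 hs
    have hpi : (π : ℂ) ≠ 0 := by exact_mod_cast Real.pi_ne_zero
    have hk' : μ = k := by
      apply mul_left_cancel₀ hpi
      rw [hk, mul_comm]
    rw [hk', Complex.norm_intCast] at hμ
    have : k = 0 := Int.abs_lt_one_iff.1 (by exact_mod_cast hμ)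
    exact hμ0 (by rw [hk', this, Int.cast_zero])
  by_cases h0 : ν = 0
  · subst h0
    have hex : ∃ n : ℤ, ((0 : ℝ) : ℂ) = n := ⟨0, by simp⟩
    rw [besselK, if_pos hex]
    apply Tendsto.limUnder_eq
    have hc : ContinuousAt
        (fun μ : ℂ => 1 / 2 * ((z / 2 : ℝ) : ℂ) ^ (-μ) * macJ μ (z ^ 2 / 4)) 0 :=
      (continuousAt_const.mul
        (ContinuousAt.const_cpow (by fun_prop) (Or.inl hz0))).mul
        (macJ_continuousAt (by positivity) 0)
    have ht := tendsto_nhdsWithin_of_tendsto_nhds (s := {(0 : ℂ)}ᶜ) hc.tendsto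
    simp only [Complex.ofReal_zero, neg_zero] at ht ⊢
    refine ht.congr' ?_
    filter_upwards [self_mem_nhdsWithin,
      mem_nhdsWithin_of_mem_nhds (Metric.ball_mem_nhds (0 : ℂ) one_pos)] with μ hμ hb
    have hb : ‖μ‖ < 1 := by simpa using hb
    exact (besselKGen_eq ((Complex.abs_re_le_norm μ).trans_lt hb) (hsin μ hb hμ) hz).symm
  · have hnorm : ‖(ν : ℂ)‖ < 1 := by simpa using hν
    have hν0 : (ν : ℂ) ≠ 0 := by exact_mod_cast h0
    have hex : ¬ ∃ n : ℤ, (ν : ℂ) = n := by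
      rintro ⟨n, hn⟩
      rw [hn, Complex.norm_intCast] at hnorm
      have : n = 0 := Int.abs_lt_one_iff.1 (by exact_mod_cast hnorm)
      exact hν0 (by rw [hn, this, Int.cast_zero])
    rw [besselK, if_neg hex]
    change besselKGen ν z = _
    rw [← besselKGen_neg, besselKGen_eq (by simpa using hν)
      (by simpa using hsin ν hnorm hν0) hz, neg_neg]

/-! ### Exponential mixture representation -/

/-- The mixing density `(t² - 1)^{ν - 1/2}` on `(1, ∞)`. -/
noncomputable def mixW (ν t : ℝ) : ℝ := (t ^ 2 - 1) ^ (ν - 1 / 2)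

lemma mixW_nonneg (ν : ℝ) {t : ℝ} (ht : 1 < t) : 0 ≤ mixW ν t :=
  Real.rpow_nonneg (by nlinarith) _

lemma mixW_pos (ν : ℝ) {t : ℝ} (ht : 1 < t) : 0 < mixW ν t :=
  Real.rpow_pos_of_pos (by nlinarith) _

lemma mixW_continuousOn (ν : ℝ) : ContinuousOn (mixW ν) (Ioi 1) := by
  unfold mixW
  refine ContinuousOn.rpow_const (by fun_prop) fun t ht => Or.inl ?_
  have : 1 < t := ht
  nlinarith

lemma mixW_le_two {ν : ℝ} (h1 : -(1 / 4) < ν) (h2 : ν < 1 / 4) {t : ℝ} (ht : 2 < t) :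
    mixW ν t ≤ 2 * t ^ (2 * ν - 1) := by
  have ht0 : 0 < t := by linarith
  calc mixW ν t ≤ (t ^ 2 / 2) ^ (ν - 1 / 2) :=
        Real.rpow_le_rpow_of_nonpos (by positivity) (by nlinarith) (by linarith)
    _ = t ^ (2 * ν - 1) * 2 ^ (1 / 2 - ν) := by
        rw [Real.div_rpow (by positivity) (by norm_num), ← Real.rpow_natCast,
          ← Real.rpow_mul ht0.le, div_eq_mul_inv, ← Real.rpow_neg (by norm_num)]
        congr 2
        · push_cast; ring
        · ring
    _ ≤ t ^ (2 * ν - 1) * 2 ^ (1 : ℝ) := by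
        gcongr
        · norm_num
        · linarith
    _ = _ := by rw [Real.rpow_one, mul_comm]

lemma mixW_integrableOn {ν : ℝ} (h1 : -(1 / 4) < ν) (h2 : ν < 1 / 4) :
    IntegrableOn (fun t => mixW ν t * t ^ (-(1 / 2) : ℝ)) (Ioi 1) := by
  have hcont : ContinuousOn (fun t : ℝ => mixW ν t * t ^ (-(1 / 2) : ℝ)) (Ioi 1) := by
    refine (mixW_continuousOn ν).mul (ContinuousOn.rpow_const continuousOn_id fun t ht => ?_)
    have : 1 < t := ht
    exact Or.inl (by positivity)
  rw [← Ioc_union_Ioi_eq_Ioi (show (1:ℝ) ≤ 2 by norm_num)]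
  refine IntegrableOn.union ?_ ?_
  · have hi : IntervalIntegrable (fun t : ℝ => (t - 1) ^ (ν - 1 / 2)) volume 1 2 := by
      have := (intervalIntegral.intervalIntegrable_rpow' (a := 0) (b := 1)
        (show -1 < ν - 1 / 2 by linarith)).comp_sub_right 1
      norm_num at this
      exact this
    rw [intervalIntegrable_iff_integrableOn_Ioc_of_le (by norm_num)] at hi
    refine hi.mono' ((hcont.mono Ioc_subset_Ioi_self).aestronglyMeasurable measurableSet_Ioc) ?_
    refine (ae_restrict_iff' measurableSet_Ioc).2 (Eventually.of_forall fun t ht => ?_)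
    have ht1 : 1 < t := ht.1
    rw [Real.norm_of_nonneg (mul_nonneg (mixW_nonneg ν ht1)
      (Real.rpow_nonneg (by linarith) _))]
    have ha : mixW ν t ≤ (t - 1) ^ (ν - 1 / 2) :=
      Real.rpow_le_rpow_of_nonpos (by linarith) (by nlinarith) (by linarith)
    have hb : t ^ (-(1 / 2) : ℝ) ≤ 1 :=
      Real.rpow_le_one_of_one_le_of_nonpos ht1.le (by norm_num)
    calc _ ≤ (t - 1) ^ (ν - 1 / 2) * 1 := by
          gcongr
      _ = _ := mul_one _
  · have hi := (integrableOn_Ioi_rpow_of_lt (a := 2 * ν - 3 / 2) (c := 2) (by linarith)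
      (by norm_num)).const_mul 2
    refine hi.mono' ((hcont.mono (Ioi_subset_Ioi (by norm_num))).aestronglyMeasurable
      measurableSet_Ioi) ?_
    refine (ae_restrict_iff' measurableSet_Ioi).2 (Eventually.of_forall fun t ht => ?_)
    have ht2 : 2 < t := ht
    have ht0 : 0 < t := by linarith
    rw [Real.norm_of_nonneg (mul_nonneg (mixW_nonneg ν (by linarith))
      (Real.rpow_nonneg (by linarith) _))]
    calc _ ≤ 2 * t ^ (2 * ν - 1) * t ^ (-(1 / 2) : ℝ) := by
          gcongr
          exact mixW_le_two h1 h2 ht2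
      _ = _ := by
          rw [mul_assoc, ← Real.rpow_add ht0]
          congr 2
          ring

/-- The moments `P_j(z) = ∫₁^∞ t^j e^{-zt} (t² - 1)^{ν-1/2} dt`. The function `P₀` is a positive
multiple of `z^{-ν} K_ν(z)`, and `P₁ = -P₀'`. -/
noncomputable def mixP (ν : ℝ) (j : ℕ) (z : ℝ) : ℝ :=
  ∫ t in Ioi (1 : ℝ), Real.exp (-(z * t)) * t ^ j * mixW ν t

lemma mixP_integrableOn {ν : ℝ} (h1 : -(1 / 4) < ν) (h2 : ν < 1 / 4) (j : ℕ) {z : ℝ}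
    (hz : 0 < z) : IntegrableOn (fun t => Real.exp (-(z * t)) * t ^ j * mixW ν t) (Ioi 1) := by
  refine ((mixW_integrableOn h1 h2).const_mul ((j + 1).factorial / z ^ (j + 1))).mono' ?_ ?_
  · exact (ContinuousOn.mul (by fun_prop) (mixW_continuousOn ν)).aestronglyMeasurable
      measurableSet_Ioi
  · refine (ae_restrict_iff' measurableSet_Ioi).2 (Eventually.of_forall fun t ht => ?_)
    have ht1 : 1 < t := ht
    have ht0 : 0 < t := by linarith
    have hw := mixW_nonneg ν ht1
    rw [Real.norm_of_nonneg (by positivity)]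
    have he := Real.pow_div_factorial_le_exp (z * t) (by positivity) (j + 1)
    have hb : 1 ≤ t * t ^ (-(1 / 2) : ℝ) := by
      nth_rw 1 [← Real.rpow_one t]
      rw [← Real.rpow_add ht0]
      exact Real.one_le_rpow ht1.le (by norm_num)
    have hx : Real.exp (-(z * t)) * t ^ (j + 1) ≤ (j + 1).factorial / z ^ (j + 1) := by
      rw [Real.exp_neg, inv_mul_le_iff₀ (Real.exp_pos _)]
      rw [mul_pow, div_le_iff₀ (by positivity)] at he
      rw [← mul_div_assoc, le_div_iff₀ (by positivity)]
      linarith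
    calc Real.exp (-(z * t)) * t ^ j * mixW ν t
        ≤ Real.exp (-(z * t)) * t ^ j * mixW ν t * (t * t ^ (-(1 / 2) : ℝ)) :=
          le_mul_of_one_le_right (by positivity) hb
      _ = (Real.exp (-(z * t)) * t ^ (j + 1)) * (mixW ν t * t ^ (-(1 / 2) : ℝ)) := by ring
      _ ≤ _ := by gcongr

lemma mixP_hasDerivAt {ν : ℝ} (h1 : -(1 / 4) < ν) (h2 : ν < 1 / 4) (j : ℕ) {z : ℝ}
    (hz : 0 < z) : HasDerivAt (mixP ν j) (-mixP ν (j + 1) z) z := by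
  have key := hasDerivAt_integral_of_dominated_loc_of_deriv_le
    (μ := volume.restrict (Ioi (1:ℝ))) (x₀ := z) (s := Ioi (z / 2))
    (F := fun (x t : ℝ) => Real.exp (-(x * t)) * t ^ j * mixW ν t)
    (F' := fun (x t : ℝ) => -(Real.exp (-(x * t)) * t ^ (j + 1) * mixW ν t))
    (bound := fun t => Real.exp (-(z / 2 * t)) * t ^ (j + 1) * mixW ν t)
    (Ioi_mem_nhds (by linarith)) ?_ (mixP_integrableOn h1 h2 j hz) ?_ ?_
    (mixP_integrableOn h1 h2 (j + 1) (half_pos hz)) ?_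
  · rw [integral_neg] at key
    exact key.2
  · filter_upwards [Ioi_mem_nhds hz] with x hx
    exact (mixP_integrableOn h1 h2 j hx).aestronglyMeasurable
  · exact (mixP_integrableOn h1 h2 (j + 1) hz).neg.aestronglyMeasurable
  · refine (ae_restrict_iff' measurableSet_Ioi).2 (Eventually.of_forall fun t ht x hx => ?_)
    have ht1 : 1 < t := ht
    have ht0 : 0 < t := by linarith
    have hx : z / 2 < x := hx
    have hw := mixW_nonneg ν ht1
    rw [norm_neg, Real.norm_of_nonneg (by positivity)]
    gcongr
  · refine (ae_restrict_iff' measurableSet_Ioi).2 (Eventually.of_forall fun t ht x hx => ?_)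
    have hd : HasDerivAt (fun x : ℝ => Real.exp (-(x * t)))
        (Real.exp (-(x * t)) * (-(1 * t))) x := ((hasDerivAt_id x).mul_const t).neg.exp
    convert! (hd.mul_const (t ^ j)).mul_const (mixW ν t) using 1
    ring

/-- The integral of the derivative of `e^{-zt} (t² - 1)^{ν+1/2}` over `(1, ∞)` vanishes. -/
lemma mixP_recurrence {ν : ℝ} (h1 : -(1 / 4) < ν) (h2 : ν < 1 / 4) {z : ℝ} (hz : 0 < z) :
    z * mixP ν 2 z = z * mixP ν 0 z + (2 * ν + 1) * mixP ν 1 z := by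
  have i0 := mixP_integrableOn h1 h2 0 hz
  have i1 := mixP_integrableOn h1 h2 1 hz
  have i2 := mixP_integrableOn h1 h2 2 hz
  have hInt := ((i0.const_mul z).add (i1.const_mul (2 * ν + 1))).sub (i2.const_mul z)
  have hF := integral_Ioi_of_hasDerivAt_of_tendsto (a := (1 : ℝ)) (m := (0 : ℝ))
    (f := fun t : ℝ => Real.exp (-(z * t)) * (t ^ 2 - 1) ^ (ν + 1 / 2)) ?_ ?_ hInt ?_
  · rw [integral_sub' ((i0.const_mul z).add (i1.const_mul (2 * ν + 1))) (i2.const_mul z),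
      integral_add' (i0.const_mul z) (i1.const_mul (2 * ν + 1)), integral_const_mul,
      integral_const_mul, integral_const_mul] at hF
    have h0 : ((1 : ℝ) ^ 2 - 1) ^ (ν + 1 / 2) = 0 := by
      rw [one_pow, sub_self, Real.zero_rpow (by linarith)]
    rw [h0] at hF
    simp only [mixP]
    linarith
  · refine ContinuousAt.continuousWithinAt ?_
    refine ContinuousAt.mul (by fun_prop) (ContinuousAt.rpow_const (by fun_prop) (Or.inr ?_))
    linarith
  · intro t ht
    have ht1 : 1 < t := ht
    have hpos : 0 < t ^ 2 - 1 := by nlinarith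
    have hd : HasDerivAt (fun t : ℝ => Real.exp (-(z * t)))
        (Real.exp (-(z * t)) * (-(z * 1))) t := ((hasDerivAt_id t).const_mul z).neg.exp
    have hp := ((hasDerivAt_pow 2 t).sub_const 1).rpow_const (p := ν + 1 / 2)
      (Or.inl hpos.ne')
    convert! hd.mul hp using 1
    have e1 : (t ^ 2 - 1) ^ (ν + 1 / 2) = (t ^ 2 - 1) * mixW ν t := by
      rw [mixW]
      nth_rw 2 [← Real.rpow_one (t ^ 2 - 1)]
      rw [← Real.rpow_add hpos]
      congr 1
      ring
    have e2 : (t ^ 2 - 1) ^ (ν + 1 / 2 - 1) = mixW ν t := by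
      rw [mixW]
      congr 1
      ring
    rw [e1, e2]
    simp
    ring
  · have hlim : Tendsto (fun t : ℝ => t ^ (2 : ℝ) * Real.exp (-z * t)) atTop (𝓝 0) :=
      tendsto_rpow_mul_exp_neg_mul_atTop_nhds_zero 2 z hz
    refine squeeze_zero' ?_ ?_ hlim
    · filter_upwards [eventually_gt_atTop 1] with t ht
      have : 0 ≤ t ^ 2 - 1 := by nlinarith
      positivity
    · filter_upwards [eventually_gt_atTop 1] with t ht
      have hle : (t ^ 2 - 1) ^ (ν + 1 / 2) ≤ t ^ (2 : ℝ) := by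
        calc (t ^ 2 - 1) ^ (ν + 1 / 2) ≤ (t ^ 2) ^ (ν + 1 / 2) :=
              Real.rpow_le_rpow (by nlinarith) (by linarith) (by linarith)
          _ ≤ (t ^ 2) ^ (1 : ℝ) :=
              Real.rpow_le_rpow_of_exponent_le (by nlinarith) (by linarith)
          _ = t ^ (2 : ℝ) := by rw [Real.rpow_one, Real.rpow_two]
      rw [mul_comm, neg_mul]
      gcongr

lemma mixP_nonneg (ν : ℝ) (j : ℕ) (z : ℝ) : 0 ≤ mixP ν j z := by
  refine setIntegral_nonneg measurableSet_Ioi fun t ht => ?_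
  have ht1 : 1 < t := ht
  have hw := mixW_nonneg ν ht1
  have ht0 : 0 < t := by linarith
  positivity

lemma setIntegral_Ioi_pos {f : ℝ → ℝ} {a : ℝ} (hf : ∀ t, a < t → 0 < f t)
    (hi : IntegrableOn f (Ioi a)) : 0 < ∫ t in Ioi a, f t := by
  rw [setIntegral_pos_iff_support_of_nonneg_ae
    ((ae_restrict_iff' measurableSet_Ioi).2 (Eventually.of_forall fun t ht => (hf t ht).le)) hi]
  have hsub : Ioi a ⊆ Function.support f := fun t ht => (hf t ht).ne'
  rw [inter_eq_self_of_subset_right hsub]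
  simp

lemma mixP_pos {ν : ℝ} (h1 : -(1 / 4) < ν) (h2 : ν < 1 / 4) {z : ℝ} (hz : 0 < z) :
    0 < mixP ν 0 z := by
  refine setIntegral_Ioi_pos (fun t ht => ?_) (mixP_integrableOn h1 h2 0 hz)
  have hw := mixW_pos ν ht
  positivity

lemma mixP_decay {ν : ℝ} (h1 : -(1 / 4) < ν) (h2 : ν < 1 / 4) (j : ℕ) {z : ℝ}
    (hz : 1 ≤ z) : mixP ν j z ≤ Real.exp (1 - z) * mixP ν j 1 := by
  rw [mixP, mixP, ← integral_const_mul]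
  refine setIntegral_mono_on (mixP_integrableOn h1 h2 j (by linarith))
    ((mixP_integrableOn h1 h2 j one_pos).const_mul _) measurableSet_Ioi fun t ht => ?_
  have ht1 : 1 < t := ht
  have ht0 : 0 < t := by linarith
  have hw := mixW_nonneg ν ht1
  rw [← mul_assoc, ← mul_assoc, ← Real.exp_add]
  gcongr
  nlinarith

lemma macJ_norm_le {y₀ y : ℝ} (h0 : 0 < y₀) (h : y₀ ≤ y) (μ : ℂ) :
    ‖macJ μ y‖ ≤ ∫ u in Ioi (0 : ℝ), ‖(u : ℂ) ^ (μ - 1) • macWeight y₀ u‖ := by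
  refine (norm_integral_le_integral_norm _).trans ?_
  refine setIntegral_mono_on (macJ_convergent (h0.trans_le h) μ).norm
    (macJ_convergent h0 μ).norm measurableSet_Ioi fun u hu => ?_
  have hu : 0 < u := hu
  rw [norm_smul, norm_smul, macWeight_norm, macWeight_norm]
  gcongr

lemma macJ_real_pos {y : ℝ} (hy : 0 < y) (ν : ℝ) : ∃ c : ℝ, 0 < c ∧ macJ ν y = c := by
  have hc := macJ_convergent hy ν
  have heq : EqOn (fun u : ℝ => (u : ℂ) ^ ((ν : ℂ) - 1) • macWeight y u)
      (fun u : ℝ => ((u ^ (ν - 1) * Real.exp (-u - y / u) : ℝ) : ℂ)) (Ioi 0) := by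
    intro u hu
    have hu : 0 < u := hu
    simp only [macWeight, smul_eq_mul]
    rw [Complex.ofReal_mul, Complex.ofReal_cpow hu.le]
    push_cast
    rfl
  refine ⟨∫ u in Ioi (0 : ℝ), u ^ (ν - 1) * Real.exp (-u - y / u), ?_, ?_⟩
  · refine setIntegral_Ioi_pos (fun u hu => by positivity) ?_
    have := (integrableOn_congr_fun heq measurableSet_Ioi).1 hc
    exact Integrable.re this
  · rw [macJ, mellin, setIntegral_congr_fun measurableSet_Ioi heq]
    exact integral_ofReal

lemma macJ_comp_hasDerivAt (μ : ℂ) {z : ℝ} (hz : 0 < z) :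
    HasDerivAt (fun z : ℝ => macJ μ (z ^ 2 / 4))
      (-(z / 2 * macJ (μ - 1) (z ^ 2 / 4))) z := by
  have hq : HasDerivAt (fun z : ℝ => z ^ 2 / 4) (z / 2) z := by
    convert! (hasDerivAt_pow 2 z).div_const 4 using 1
    simp
    ring
  have := (macJ_hasDerivAt (y := z ^ 2 / 4) (by positivity) μ).scomp z hq
  convert! this using 1
  simp [Complex.real_smul]

lemma macJ_recurrence {y : ℝ} (hy : 0 < y) (μ : ℂ) :
    y * macJ (μ - 2) y = macJ μ y - (μ - 1) * macJ (μ - 1) y := by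
  have hy0 : (y : ℂ) ≠ 0 := by exact_mod_cast (ne_of_gt hy)
  -- Differentiate `J_{μ-1} = y^{μ-1} J_{1-μ}` and compare with `J_{μ-1}' = -J_{μ-2}`.
  have hd1 := macJ_hasDerivAt hy (μ - 1)
  have hp : HasDerivAt (fun w : ℂ => w ^ (μ - 1)) ((μ - 1) * (y : ℂ) ^ (μ - 1 - 1)) (y : ℂ) := by
    simpa using (hasDerivAt_id (y : ℂ)).cpow_const (c := μ - 1) (by simp [hy])
  have hd2 := hp.comp_ofReal.mul (macJ_hasDerivAt hy (1 - μ))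
  have heq : macJ (μ - 1) =ᶠ[𝓝 y] fun y : ℝ => (y : ℂ) ^ (μ - 1) * macJ (1 - μ) y := by
    filter_upwards [Ioi_mem_nhds hy] with x hx
    have := macJ_neg hx (1 - μ)
    rwa [neg_sub] at this
  have hu := hd1.unique (hd2.congr_of_eventuallyEq heq)
  have hn1 := macJ_neg hy (1 - μ)
  have hn2 := macJ_neg hy μ
  rw [neg_sub] at hn1
  rw [show 1 - μ - 1 = -μ by ring, hn2, show μ - 1 - 1 = μ - 2 by ring] at hu
  have c1 : (y : ℂ) ^ (μ - 2) * y = (y : ℂ) ^ (μ - 1) := by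
    nth_rw 2 [← Complex.cpow_one (y : ℂ)]
    rw [← Complex.cpow_add _ _ hy0]
    congr 1
    ring
  have c2 : (y : ℂ) ^ (μ - 1) * (y : ℂ) ^ (-μ) * y = 1 := by
    nth_rw 3 [← Complex.cpow_one (y : ℂ)]
    rw [← Complex.cpow_add _ _ hy0, ← Complex.cpow_add _ _ hy0,
      show μ - 1 + -μ + 1 = 0 by ring, Complex.cpow_zero]
  linear_combination (-(y : ℂ)) * hu + macJ μ y * c2 - (μ - 1) * macJ (1 - μ) y * c1
    + (μ - 1) * hn1

/-- `J_{-ν}(z²/4)` is a positive multiple of `P₀(z)`: both solve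
`z f'' + (2ν+1) f' - z f = 0`, and the weighted Wronskian `z^{2ν+1} W` is constant and tends to `0`
at infinity because `P₀, P₁` decay exponentially. -/
lemma macJ_eq_mixP {ν : ℝ} (h1 : -(1 / 4) < ν) (h2 : ν < 1 / 4) :
    ∃ c : ℝ, 0 < c ∧ ∀ z : ℝ, 0 < z → macJ (-ν) (z ^ 2 / 4) = ((c * mixP ν 0 z : ℝ) : ℂ) := by
  set k : ℝ → ℂ := fun z => macJ (-ν) (z ^ 2 / 4) with hk
  set l : ℝ → ℂ := fun z => z / 2 * macJ (-ν - 1) (z ^ 2 / 4) with hl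
  have dk : ∀ z : ℝ, 0 < z → HasDerivAt k (-l z) z := fun z hz => macJ_comp_hasDerivAt _ hz
  have dl : ∀ z : ℝ, 0 < z → HasDerivAt l (-(k z + (2 * ν + 1) * l z / z)) z := by
    intro z hz
    have hz0 : (z : ℂ) ≠ 0 := by exact_mod_cast hz.ne'
    have hid : HasDerivAt (fun z : ℝ => (z : ℂ) / 2) (1 / 2) z :=
      ((hasDerivAt_id (z : ℂ)).comp_ofReal).div_const 2
    have hd := hid.mul (macJ_comp_hasDerivAt (-ν - 1) hz)
    have hr := macJ_recurrence (y := z ^ 2 / 4) (by positivity) (-ν)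
    convert! hd using 1
    simp only [hk, hl]
    rw [show (-(ν : ℂ) - 1 - 1) = -ν - 2 by ring]
    push_cast at hr
    field_simp
    linear_combination 4 * hr
  have dp : ∀ z : ℝ, 0 < z →
      HasDerivAt (fun z => (mixP ν 0 z : ℂ)) (-(mixP ν 1 z : ℂ)) z := by
    intro z hz
    simpa using (mixP_hasDerivAt h1 h2 0 hz).ofReal_comp
  have dq : ∀ z : ℝ, 0 < z → HasDerivAt (fun z => (mixP ν 1 z : ℂ))
      (-((mixP ν 0 z : ℂ) + (2 * ν + 1) * mixP ν 1 z / z)) z := by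
    intro z hz
    have hz0 : (z : ℂ) ≠ 0 := by exact_mod_cast hz.ne'
    have hr : (z : ℂ) * mixP ν 2 z = z * mixP ν 0 z + (2 * ν + 1) * mixP ν 1 z := by
      exact_mod_cast mixP_recurrence h1 h2 hz
    convert! (mixP_hasDerivAt h1 h2 1 hz).ofReal_comp using 1
    push_cast
    field_simp
    linear_combination hr
  set W : ℝ → ℂ := fun z =>
    ((z ^ (2 * ν + 1) : ℝ) : ℂ) * ((mixP ν 0 z : ℂ) * l z - (mixP ν 1 z : ℂ) * k z) with hW
  have dW : ∀ z : ℝ, 0 < z → HasDerivAt W 0 z := by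
    intro z hz
    have hz0 : (z : ℂ) ≠ 0 := by exact_mod_cast hz.ne'
    have hp := (Real.hasDerivAt_rpow_const (x := z) (p := 2 * ν + 1) (Or.inl hz.ne')).ofReal_comp
    have hd := hp.mul (((dp z hz).mul (dl z hz)).sub ((dq z hz).mul (dk z hz)))
    convert! hd using 1
    simp only [Pi.sub_apply, Pi.mul_apply]
    rw [Real.rpow_sub hz, Real.rpow_one]
    push_cast
    field_simp
    ring
  have hlim : Tendsto W atTop (𝓝 0) := by
    set A := ∫ u in Ioi (0 : ℝ), ‖(u : ℂ) ^ (-(ν : ℂ) - 1) • macWeight (1 / 4) u‖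
    set B := ∫ u in Ioi (0 : ℝ), ‖(u : ℂ) ^ (-(ν : ℂ) - 1 - 1) • macWeight (1 / 4) u‖
    have hA : 0 ≤ A := integral_nonneg fun _ => norm_nonneg _
    have hB : 0 ≤ B := integral_nonneg fun _ => norm_nonneg _
    have hP0 := mixP_nonneg ν 0 1
    have hP1 := mixP_nonneg ν 1 1
    have hz3 := (tendsto_rpow_mul_exp_neg_mul_atTop_nhds_zero 3 1 one_pos).const_mul
      (Real.exp 1 * (mixP ν 0 1 * B + mixP ν 1 1 * A))
    rw [mul_zero] at hz3
    refine squeeze_zero_norm' ?_ hz3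
    filter_upwards [eventually_ge_atTop 1] with z hz
    have hz0 : 0 < z := by linarith
    have hy : (1 / 4 : ℝ) ≤ z ^ 2 / 4 := by nlinarith
    have bk : ‖k z‖ ≤ z * A := by
      have := macJ_norm_le (by norm_num) hy (-(ν : ℂ))
      calc ‖k z‖ ≤ 1 * A := by rw [one_mul]; exact this
        _ ≤ z * A := by gcongr
    have bl : ‖l z‖ ≤ z * B := by
      have := macJ_norm_le (by norm_num) hy (-(ν : ℂ) - 1)
      simp only [hl, norm_mul, norm_div, Complex.norm_real, Real.norm_of_nonneg hz0.le]
      have h2 : z / ‖(2 : ℂ)‖ ≤ z := by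
        simp
        linarith
      gcongr
    have bp : ‖(mixP ν 0 z : ℂ)‖ ≤ Real.exp (1 - z) * mixP ν 0 1 := by
      rw [Complex.norm_real, Real.norm_of_nonneg (mixP_nonneg _ _ _)]
      exact mixP_decay h1 h2 0 hz
    have bq : ‖(mixP ν 1 z : ℂ)‖ ≤ Real.exp (1 - z) * mixP ν 1 1 := by
      rw [Complex.norm_real, Real.norm_of_nonneg (mixP_nonneg _ _ _)]
      exact mixP_decay h1 h2 1 hz
    have bz : ‖((z ^ (2 * ν + 1) : ℝ) : ℂ)‖ ≤ z ^ (2 : ℝ) := by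
      rw [Complex.norm_real, Real.norm_of_nonneg (by positivity)]
      exact Real.rpow_le_rpow_of_exponent_le hz (by linarith)
    calc ‖W z‖ ≤ z ^ (2 : ℝ) * (Real.exp (1 - z) * mixP ν 0 1 * (z * B)
          + Real.exp (1 - z) * mixP ν 1 1 * (z * A)) := by
          rw [hW, norm_mul]
          refine mul_le_mul bz ((norm_sub_le _ _).trans ?_) (norm_nonneg _) (by positivity)
          rw [norm_mul (mixP ν 0 z : ℂ), norm_mul (mixP ν 1 z : ℂ)]
          exact add_le_add (mul_le_mul bp bl (norm_nonneg _) (by positivity))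
            (mul_le_mul bq bk (norm_nonneg _) (by positivity))
      _ = _ := by
          rw [show (3 : ℝ) = 2 + 1 by norm_num, Real.rpow_add hz0, Real.rpow_one,
            sub_eq_add_neg, Real.exp_add, neg_one_mul]
          ring
  have W0 : ∀ z : ℝ, 0 < z → W z = 0 := by
    intro z hz
    refine tendsto_nhds_unique (tendsto_const_nhds.congr' ?_) hlim
    filter_upwards [eventually_gt_atTop 0] with x hx
    exact eq_of_deriv_zero_Ioi dW hz hx
  have pne : ∀ z : ℝ, 0 < z → (mixP ν 0 z : ℂ) ≠ 0 := fun z hz => by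
    exact_mod_cast (mixP_pos h1 h2 hz).ne'
  have dquot : ∀ z : ℝ, 0 < z → HasDerivAt (fun z => k z / (mixP ν 0 z : ℂ)) 0 z := by
    intro z hz
    have hd := (dk z hz).div (dp z hz) (pne z hz)
    convert! hd using 1
    have hzp : ((z ^ (2 * ν + 1) : ℝ) : ℂ) ≠ 0 := by
      exact_mod_cast (Real.rpow_pos_of_pos hz _).ne'
    have := (mul_eq_zero.1 (W0 z hz)).resolve_left hzp
    rw [eq_comm, div_eq_zero_iff]
    left
    linear_combination -this
  obtain ⟨c, hc, hcJ⟩ := macJ_real_pos (y := 1 ^ 2 / 4) (by norm_num) (-ν)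
  refine ⟨c / mixP ν 0 1, div_pos hc (mixP_pos h1 h2 one_pos), fun z hz => ?_⟩
  have h := eq_of_deriv_zero_Ioi dquot hz one_pos
  have hk1 : k 1 = c := by
    rw [hk, ← hcJ]
    push_cast
    rfl
  simp only [hk1] at h
  rw [div_eq_iff (pne z hz)] at h
  push_cast
  exact h

/-! ### Fourier transform of the Gaussian mixture -/

lemma inv_gamma_integral {b r : ℝ} (hb : 0 < b) (hr : 0 < r) :
    IntegrableOn (fun t : ℝ => t ^ (-b - 1) * Real.exp (-(r / t))) (Ioi 0) ∧
      ∫ t in Ioi (0 : ℝ), t ^ (-b - 1) * Real.exp (-(r / t)) = (1 / r) ^ b * Real.Gamma b := by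
  have h := integral_comp_rpow_Ioi (fun v : ℝ => v ^ (b - 1) * Real.exp (-(r * v)))
    (show (-1 : ℝ) ≠ 0 by norm_num)
  rw [Real.integral_rpow_mul_exp_neg_mul_Ioi hb hr] at h
  have heq : ∫ t in Ioi (0 : ℝ), t ^ (-b - 1) * Real.exp (-(r / t))
      = (1 / r) ^ b * Real.Gamma b := by
    rw [← h]
    refine setIntegral_congr_fun measurableSet_Ioi fun t ht => ?_
    have ht : 0 < t := ht
    simp only [smul_eq_mul, abs_neg, abs_one, one_mul]
    rw [← Real.rpow_mul ht.le, ← mul_assoc, ← Real.rpow_add ht, Real.rpow_neg_one,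
      div_eq_mul_inv]
    congr 2
    ring
  refine ⟨.of_integral_ne_zero ?_, heq⟩
  rw [heq]
  have := Real.Gamma_pos_of_pos hb
  positivity

/-- Up to the factor `√2`, the Fourier transform of the Gaussian mixture `x ↦ P₀(2πx²)`. -/
noncomputable def mixG (ν η : ℝ) : ℝ :=
  ∫ t in Ioi (1 : ℝ), mixW ν t * t ^ (-(1 / 2) : ℝ) * Real.exp (-(π * η ^ 2 / 2 / t))

lemma mixG_integrableOn {ν : ℝ} (h1 : -(1 / 4) < ν) (h2 : ν < 1 / 4) (η : ℝ) :
    IntegrableOn (fun t : ℝ => mixW ν t * t ^ (-(1 / 2) : ℝ) * Real.exp (-(π * η ^ 2 / 2 / t)))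
      (Ioi 1) := by
  have hi := mixW_integrableOn h1 h2
  refine hi.mono' (hi.aestronglyMeasurable.mul
    (Measurable.aestronglyMeasurable (by fun_prop))) ?_
  refine (ae_restrict_iff' measurableSet_Ioi).2 (Eventually.of_forall fun t ht => ?_)
  have ht1 : 1 < t := ht
  have ht0 : 0 < t := by linarith
  have hw := mixW_nonneg ν ht1
  rw [Real.norm_of_nonneg (by positivity)]
  refine mul_le_of_le_one_right (by positivity) (Real.exp_le_one_iff.2 ?_)
  have : 0 ≤ π * η ^ 2 / 2 / t := by positivity
  linarith

lemma mixG_pos {ν : ℝ} (h1 : -(1 / 4) < ν) (h2 : ν < 1 / 4) (η : ℝ) : 0 < mixG ν η := by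
  refine setIntegral_Ioi_pos (fun t ht => ?_) (mixG_integrableOn h1 h2 η)
  have ht0 : 0 < t := by linarith
  have hw := mixW_pos ν ht
  positivity

lemma mixG_le_zero {ν : ℝ} (h1 : -(1 / 4) < ν) (h2 : ν < 1 / 4) (η : ℝ) :
    mixG ν η ≤ mixG ν 0 := by
  refine setIntegral_mono_on (mixG_integrableOn h1 h2 η) (mixG_integrableOn h1 h2 0)
    measurableSet_Ioi fun t ht => ?_
  have ht1 : 1 < t := ht
  have ht0 : 0 < t := by linarith
  have hw := mixW_nonneg ν ht1
  refine mul_le_mul_of_nonneg_left (Real.exp_le_exp.2 ?_) (by positivity)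
  have : 0 ≤ π * η ^ 2 / 2 / t := by positivity
  simpa using this

/-- Decay of the Fourier transform, with `X = η²`. On `t ≤ 2` the Gaussian factor
compensates the power of `X`; on `t > 2` the density is comparable to `t^{2ν-1}`, for which the integral scales
exactly like `X^{2ν-1/2}`. -/
lemma mixG_decay {ν : ℝ} (h1 : -(1 / 4) < ν) (h2 : ν < 1 / 4) {η : ℝ} (hη : η ≠ 0) :
    (η ^ 2) ^ (1 / 2 - 2 * ν) * mixG ν η
      ≤ 2 * mixG ν 0 + 2 * Real.Gamma (1 / 2 - 2 * ν) := by
  set b := 1 / 2 - 2 * ν with hb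
  have hb0 : 0 < b := by linarith
  have hb1 : b < 1 := by linarith
  set X := η ^ 2 with hX
  have hX0 : 0 < X := by positivity
  set r := π * X / 2 with hr
  have hr0 : 0 < r := by positivity
  have hrX : X ≤ r := by
    have := Real.pi_gt_three
    rw [hr]
    nlinarith
  obtain ⟨hi, hval⟩ := inv_gamma_integral hb0 hr0
  have hi1 : IntegrableOn (fun t : ℝ => t ^ (-b - 1) * Real.exp (-(r / t))) (Ioi 1) :=
    hi.mono_set (Ioi_subset_Ioi (by norm_num))
  have hM := (mixG_integrableOn h1 h2 0).const_mul 2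
  have hN := hi1.const_mul (2 * X ^ b)
  have step : X ^ b * mixG ν η ≤
      2 * mixG ν 0 + 2 * X ^ b * ∫ t in Ioi (1 : ℝ), t ^ (-b - 1) * Real.exp (-(r / t)) := by
    rw [mixG, mixG, ← integral_const_mul, ← integral_const_mul, ← integral_const_mul,
      ← integral_add hM hN]
    refine setIntegral_mono_on ((mixG_integrableOn h1 h2 η).const_mul _) (hM.add hN)
      measurableSet_Ioi fun t ht => ?_
    have ht1 : 1 < t := ht
    have ht0 : 0 < t := by linarith
    have hw := mixW_nonneg ν ht1
    have hz : Real.exp (-(π * 0 ^ 2 / 2 / t)) = 1 := by simp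
    simp only [hz, mul_one]
    rcases le_or_gt t 2 with ht2 | ht2
    · have hXb : X ^ b * Real.exp (-(r / t)) ≤ 2 := by
        have e1 : X ^ b ≤ 1 + X := by
          rcases le_total X 1 with hx | hx
          · linarith [Real.rpow_le_one hX0.le hx hb0.le]
          · have := Real.rpow_le_rpow_of_exponent_le hx hb1.le
            rw [Real.rpow_one] at this
            linarith
        have e2 : X / 2 ≤ r / t := by
          rw [div_le_div_iff₀ (by norm_num) ht0]
          nlinarith
        have e3 := Real.add_one_le_exp (r / t)
        rw [Real.exp_neg, ← div_eq_mul_inv, div_le_iff₀ (Real.exp_pos _)]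
        linarith
      have hpos : 0 ≤ 2 * X ^ b * (t ^ (-b - 1) * Real.exp (-(r / t))) := by positivity
      have hq : 0 ≤ mixW ν t * t ^ (-(1 / 2) : ℝ) := by positivity
      calc X ^ b * (mixW ν t * t ^ (-(1 / 2) : ℝ) * Real.exp (-(r / t)))
          = (X ^ b * Real.exp (-(r / t))) * (mixW ν t * t ^ (-(1 / 2) : ℝ)) := by ring
        _ ≤ 2 * (mixW ν t * t ^ (-(1 / 2) : ℝ)) := by gcongr
        _ ≤ _ := by linarith
    · have hm := mixW_le_two h1 h2 ht2
      have hpw : t ^ (2 * ν - 1) * t ^ (-(1 / 2) : ℝ) = t ^ (-b - 1) := by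
        rw [← Real.rpow_add ht0]
        congr 1
        rw [hb]
        ring
      have hq : 0 ≤ 2 * (mixW ν t * t ^ (-(1 / 2) : ℝ)) := by positivity
      calc X ^ b * (mixW ν t * t ^ (-(1 / 2) : ℝ) * Real.exp (-(r / t)))
          ≤ X ^ b * (2 * t ^ (2 * ν - 1) * t ^ (-(1 / 2) : ℝ) * Real.exp (-(r / t))) := by
            gcongr
        _ = 2 * X ^ b * (t ^ (-b - 1) * Real.exp (-(r / t))) := by
            rw [← hpw]
            ring
        _ ≤ _ := by linarith
  have hle : ∫ t in Ioi (1 : ℝ), t ^ (-b - 1) * Real.exp (-(r / t))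
      ≤ (1 / r) ^ b * Real.Gamma b := by
    rw [← hval]
    refine setIntegral_mono_set hi ?_ (Ioi_subset_Ioi (by norm_num)).eventuallyLE
    refine (ae_restrict_iff' measurableSet_Ioi).2 (Eventually.of_forall fun t ht => ?_)
    have ht0 : 0 < t := ht
    simp only [Pi.zero_apply]
    positivity
  have hXr : X ^ b * (1 / r) ^ b ≤ 1 := by
    rw [← Real.mul_rpow hX0.le (by positivity)]
    refine Real.rpow_le_one (by positivity) ?_ hb0.le
    rw [mul_one_div, div_le_one hr0]
    exact hrX
  have hG := Real.Gamma_pos_of_pos hb0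
  calc X ^ b * mixG ν η ≤ _ := step
    _ ≤ 2 * mixG ν 0 + 2 * X ^ b * ((1 / r) ^ b * Real.Gamma b) := by gcongr
    _ = 2 * mixG ν 0 + 2 * (X ^ b * (1 / r) ^ b * Real.Gamma b) := by ring
    _ ≤ 2 * mixG ν 0 + 2 * (1 * Real.Gamma b) := by gcongr
    _ = _ := by ring

lemma mixG_bound {ν : ℝ} (h1 : -(1 / 4) < ν) (h2 : ν < 1 / 4) :
    ∃ C : ℝ, 0 < C ∧ ∀ η : ℝ, mixG ν η ≤ C * (1 + η ^ 4) ^ (-(1 / 4 - ν)) := by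
  have hM := mixG_pos h1 h2 0
  have hG := Real.Gamma_pos_of_pos (show 0 < 1 / 2 - 2 * ν by linarith)
  refine ⟨3 * mixG ν 0 + 2 * Real.Gamma (1 / 2 - 2 * ν), by positivity, fun η => ?_⟩
  have hp := mixG_pos h1 h2 η
  have hη4 : (0:ℝ) ≤ η ^ 4 := by positivity
  rw [Real.rpow_neg (by positivity), ← div_eq_mul_inv, le_div_iff₀ (by positivity), mul_comm]
  have hadd : (1 + η ^ 4) ^ (1 / 4 - ν) ≤ 1 ^ (1 / 4 - ν) + (η ^ 4) ^ (1 / 4 - ν) :=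
    Real.rpow_add_le_add_rpow zero_le_one hη4 (by linarith) (by linarith)
  rw [Real.one_rpow] at hadd
  have h0 := mixG_le_zero h1 h2 η
  have hd : (η ^ 4) ^ (1 / 4 - ν) * mixG ν η
      ≤ 2 * mixG ν 0 + 2 * Real.Gamma (1 / 2 - 2 * ν) := by
    by_cases hη : η = 0
    · rw [hη, zero_pow (by norm_num), Real.zero_rpow (by linarith), zero_mul]
      positivity
    · have e : (η ^ 4) ^ (1 / 4 - ν) = (η ^ 2) ^ (1 / 2 - 2 * ν) := by
        rw [show η ^ 4 = (η ^ 2) ^ 2 by ring, ← Real.rpow_natCast (η ^ 2) 2,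
          ← Real.rpow_mul (by positivity)]
        congr 1
        push_cast
        ring
      rw [e]
      exact mixG_decay h1 h2 hη
  calc _ ≤ (1 + (η ^ 4) ^ (1 / 4 - ν)) * mixG ν η := by gcongr
    _ = mixG ν η + (η ^ 4) ^ (1 / 4 - ν) * mixG ν η := by ring
    _ ≤ _ := by linarith

lemma mixW_measurable (ν : ℝ) : Measurable (mixW ν) := by
  unfold mixW
  fun_prop

lemma sqrt_gauss {t : ℝ} (ht : 0 < t) :
    Real.sqrt (π / (2 * π * t)) = (2 : ℝ) ^ (-(1 / 2) : ℝ) * t ^ (-(1 / 2) : ℝ) := by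
  rw [← Real.mul_rpow (by norm_num) ht.le, Real.rpow_neg (by positivity), ← Real.sqrt_eq_rpow,
    ← Real.sqrt_inv]
  congr 1
  field_simp

/-- Fubini and the Fourier transform of a Gaussian. -/
lemma fourier_mixP {ν : ℝ} (h1 : -(1 / 4) < ν) (h2 : ν < 1 / 4) (η : ℝ) :
    ∫ x : ℝ, Complex.exp (Complex.I * ((-2 * π * η : ℝ) : ℂ) * x) *
      (mixP ν 0 (2 * π * x ^ 2) : ℂ) = (((2 : ℝ) ^ (-(1 / 2) : ℝ) * mixG ν η : ℝ) : ℂ) := by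
  have hphase : ∀ x : ℝ, ‖Complex.exp (Complex.I * ((-2 * π * η : ℝ) : ℂ) * x)‖ = 1 := by
    intro x
    rw [show Complex.I * ((-2 * π * η : ℝ) : ℂ) * x = ((-2 * π * η * x : ℝ) : ℂ) * Complex.I by
      push_cast; ring]
    exact Complex.norm_exp_ofReal_mul_I _
  set f : ℝ → ℝ → ℂ := fun x t => Complex.exp (Complex.I * ((-2 * π * η : ℝ) : ℂ) * x) *
    ((Real.exp (-(2 * π * t) * x ^ 2) * mixW ν t : ℝ) : ℂ) with hf
  have hgauss : ∀ t : ℝ, 0 < t → Integrable fun x : ℝ => Real.exp (-(2 * π * t) * x ^ 2) :=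
    fun t ht => integrable_exp_neg_mul_sq (by positivity)
  have hfm : Measurable (Function.uncurry f) := by
    have := mixW_measurable ν
    simp only [hf, Function.uncurry_def]
    fun_prop
  have hfn : ∀ x t : ℝ, 1 < t → ‖f x t‖ = Real.exp (-(2 * π * t) * x ^ 2) * mixW ν t := by
    intro x t ht
    have := mixW_nonneg ν ht
    rw [hf, norm_mul, hphase, one_mul, Complex.norm_real, Real.norm_of_nonneg (by positivity)]
  have hInt : Integrable (Function.uncurry f) (volume.prod (volume.restrict (Ioi (1:ℝ)))) := by
    rw [integrable_prod_iff' hfm.aestronglyMeasurable]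
    constructor
    · refine (ae_restrict_iff' measurableSet_Ioi).2 (Eventually.of_forall fun t ht => ?_)
      have ht1 : 1 < t := ht
      refine ((hgauss t (by linarith)).mul_const (mixW ν t)).mono'
        (hfm.of_uncurry_right).aestronglyMeasurable (Eventually.of_forall fun x => ?_)
      exact (hfn x t ht1).le
    · refine (integrableOn_congr_fun (fun t ht => ?_) measurableSet_Ioi).1
        ((mixW_integrableOn h1 h2).const_mul ((2 : ℝ) ^ (-(1 / 2) : ℝ)))
      have ht1 : 1 < t := ht
      have : ∀ x, ‖Function.uncurry f (x, t)‖ = Real.exp (-(2 * π * t) * x ^ 2) * mixW ν t :=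
        fun x => hfn x t ht1
      simp only [this]
      rw [integral_mul_const, integral_gaussian, sqrt_gauss (by linarith)]
      ring
  calc _ = ∫ x : ℝ, ∫ t in Ioi (1 : ℝ), f x t := by
        refine integral_congr_ae (Eventually.of_forall fun x => ?_)
        simp only [hf]
        rw [integral_const_mul, mixP]
        congr 1
        refine (integral_ofReal (𝕜 := ℂ)).symm.trans ?_
        refine integral_congr_ae (Eventually.of_forall fun t => ?_)
        simp only [pow_zero, mul_one]
        congr 4
        ring
    _ = ∫ t in Ioi (1 : ℝ), ∫ x : ℝ, f x t := integral_integral_swap hInt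
    _ = ∫ t in Ioi (1 : ℝ), (((2 : ℝ) ^ (-(1 / 2) : ℝ) *
          (mixW ν t * t ^ (-(1 / 2) : ℝ) * Real.exp (-(π * η ^ 2 / 2 / t))) : ℝ) : ℂ) := by
        refine setIntegral_congr_fun measurableSet_Ioi fun t ht => ?_
        have ht1 : 1 < t := ht
        have ht0 : 0 < t := by linarith
        have ht0' : (t : ℂ) ≠ 0 := by exact_mod_cast ht0.ne'
        have hpi : (π : ℂ) ≠ 0 := by exact_mod_cast Real.pi_ne_zero
        have hb : 0 < (((2 * π * t : ℝ)) : ℂ).re := by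
          rw [Complex.ofReal_re]
          positivity
        have hF := fourierIntegral_gaussian hb ((-2 * π * η : ℝ) : ℂ)
        have hroot : ((π : ℂ) / ((2 * π * t : ℝ) : ℂ)) ^ (1 / 2 : ℂ)
            = (((2 : ℝ) ^ (-(1 / 2) : ℝ) * t ^ (-(1 / 2) : ℝ) : ℝ) : ℂ) := by
          rw [← sqrt_gauss ht0, Real.sqrt_eq_rpow, Complex.ofReal_cpow (by positivity)]
          push_cast
          rfl
        have hexp : Complex.exp (-((-2 * π * η : ℝ) : ℂ) ^ 2 / (4 * ((2 * π * t : ℝ) : ℂ)))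
            = ((Real.exp (-(π * η ^ 2 / 2 / t)) : ℝ) : ℂ) := by
          rw [Complex.ofReal_exp]
          congr 1
          push_cast
          field_simp
          ring
        rw [hroot, hexp] at hF
        have hfx : ∀ x : ℝ, f x t = Complex.exp (Complex.I * ((-2 * π * η : ℝ) : ℂ) * x) *
            Complex.exp (-((2 * π * t : ℝ) : ℂ) * (x : ℂ) ^ 2) * (mixW ν t : ℂ) := by
          intro x
          simp only [hf]
          push_cast
          ring
        simp only [hfx]
        rw [integral_mul_const, hF]
        push_cast
        ring
    _ = _ := by
        rw [mixG, ← integral_const_mul]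
        exact integral_ofReal

lemma integrand_eq {s : ℝ} (hs : s ∈ Set.Ioo (1 : ℝ) 3) :
    ∃ c : ℝ, 0 < c ∧ ∀ x : ℝ, x ≠ 0 →
      ((|x| ^ (1 - s / 2) : ℝ) : ℂ) *
        besselK (((s - 2) / 4 : ℝ) : ℂ) ((2 * Real.pi * x ^ 2 : ℝ) : ℂ)
      = ((c * mixP ((s - 2) / 4) 0 (2 * π * x ^ 2) : ℝ) : ℂ) := by
  obtain ⟨hs1, hs2⟩ := hs
  set ν := (s - 2) / 4 with hν
  have h1 : -(1 / 4) < ν := by linarith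
  have h2 : ν < 1 / 4 := by linarith
  obtain ⟨c, hc, hJ⟩ := macJ_eq_mixP h1 h2
  refine ⟨1 / 2 * π ^ ν * c, by positivity, fun x hx => ?_⟩
  have hz : 0 < 2 * π * x ^ 2 := by positivity
  rw [besselK_eq (abs_lt.2 ⟨by linarith, by linarith⟩) hz, hJ _ hz]
  have hx0 : 0 < |x| := abs_pos.2 hx
  have hpow : |x| ^ (1 - s / 2) * (2 * π * x ^ 2 / 2) ^ ν = π ^ ν := by
    rw [show 2 * π * x ^ 2 / 2 = π * |x| ^ 2 by rw [sq_abs]; ring,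
      Real.mul_rpow Real.pi_pos.le (by positivity), ← Real.rpow_natCast,
      ← Real.rpow_mul hx0.le, mul_left_comm, ← Real.rpow_add hx0]
    rw [show 1 - s / 2 + ((2 : ℕ) : ℝ) * ν = 0 by push_cast; rw [hν]; ring, Real.rpow_zero,
      mul_one]
  rw [← Complex.ofReal_cpow (by positivity)]
  rw [← hpow]
  push_cast
  ring

/-! ### The estimate -/

/-- **Estimate (3.7).** For `s ∈ (1,3)` there is `C_s > 0` such that for all `ξ₁ ∈ ℝ` and
nonzero `ξ₂ ∈ ℝ`, the quantity
`Q = |ξ₂|^{(s-3)/2} ∫_ℝ e^{-2πixξ₁/|ξ₂|^{1/2}} |x|^{1-s/2} K_{(s-2)/4}(2πx²) dx`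
is real, strictly positive, and at most `C_s (ξ₁⁴ + ξ₂²)^{-(3-s)/4}`. -/
theorem besselK_oscillatory_bound (s : ℝ) (hs : s ∈ Set.Ioo (1 : ℝ) 3) :
    ∃ C : ℝ, 0 < C ∧ ∀ (ξ₁ ξ₂ : ℝ), ξ₂ ≠ 0 → ∀ Q : ℂ,
      Q = ((|ξ₂| ^ ((s - 3) / 2) : ℝ) : ℂ) *
          ∫ x : ℝ,
            Complex.exp (-2 * (Real.pi : ℂ) * Complex.I * (x : ℂ) * (ξ₁ : ℂ) /
                ((Real.sqrt |ξ₂| : ℝ) : ℂ)) *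
              ((|x| ^ (1 - s / 2) : ℝ) : ℂ) *
              besselK (((s - 2) / 4 : ℝ) : ℂ) ((2 * Real.pi * x ^ 2 : ℝ) : ℂ) →
      Q.im = 0 ∧ 0 < Q.re ∧ Q.re ≤ C * (ξ₁ ^ 4 + ξ₂ ^ 2) ^ (-((3 - s) / 4)) := by
  have hs' := hs
  obtain ⟨hs1, hs2⟩ := hs'
  set ν := (s - 2) / 4 with hν
  have h1 : -(1 / 4) < ν := by linarith
  have h2 : ν < 1 / 4 := by linarith
  obtain ⟨c, hc, hI⟩ := integrand_eq hs
  obtain ⟨C, hC, hG⟩ := mixG_bound h1 h2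
  set d : ℝ := c * (2 : ℝ) ^ (-(1 / 2) : ℝ) with hd
  have hd0 : 0 < d := by positivity
  refine ⟨d * C, by positivity, fun ξ₁ ξ₂ hξ Q hQ => ?_⟩
  have hξ0 : 0 < |ξ₂| := abs_pos.2 hξ
  set η := ξ₁ / Real.sqrt |ξ₂| with hη
  have hInt : ∫ x : ℝ,
      Complex.exp (-2 * (Real.pi : ℂ) * Complex.I * (x : ℂ) * (ξ₁ : ℂ) /
          ((Real.sqrt |ξ₂| : ℝ) : ℂ)) *
        ((|x| ^ (1 - s / 2) : ℝ) : ℂ) *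
        besselK ((ν : ℝ) : ℂ) ((2 * Real.pi * x ^ 2 : ℝ) : ℂ)
      = ((d * mixG ν η : ℝ) : ℂ) := by
    have hF := fourier_mixP h1 h2 η
    calc _ = ∫ x : ℝ, (c : ℂ) * (Complex.exp (Complex.I * ((-2 * π * η : ℝ) : ℂ) * x) *
          (mixP ν 0 (2 * π * x ^ 2) : ℂ)) := by
          refine integral_congr_ae ?_
          filter_upwards [compl_mem_ae_iff.2 (measure_singleton (0 : ℝ))] with x hx
          rw [mul_assoc, hI x hx]
          have he : -2 * (Real.pi : ℂ) * Complex.I * (x : ℂ) * (ξ₁ : ℂ) /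
              ((Real.sqrt |ξ₂| : ℝ) : ℂ) = Complex.I * ((-2 * π * η : ℝ) : ℂ) * x := by
            rw [hη]
            push_cast
            ring
          rw [he]
          push_cast
          ring
      _ = _ := by
          rw [integral_const_mul, hF, hd]
          push_cast
          ring
  rw [hInt, ← Complex.ofReal_mul] at hQ
  have hpos := mixG_pos h1 h2 η
  refine ⟨by rw [hQ, Complex.ofReal_im], ?_, ?_⟩
  · rw [hQ, Complex.ofReal_re]
    positivity
  · rw [hQ, Complex.ofReal_re]
    have hη4 : ξ₁ ^ 4 + ξ₂ ^ 2 = |ξ₂| ^ 2 * (1 + η ^ 4) := by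
      have hsq : Real.sqrt |ξ₂| ^ 4 = |ξ₂| ^ 2 := by
        rw [show Real.sqrt |ξ₂| ^ 4 = (Real.sqrt |ξ₂| ^ 2) ^ 2 by ring, Real.sq_sqrt hξ0.le]
      rw [hη, div_pow, hsq, mul_add, mul_div_cancel₀ _ (by positivity), sq_abs]
      ring
    have hexp : (ξ₁ ^ 4 + ξ₂ ^ 2) ^ (-((3 - s) / 4))
        = |ξ₂| ^ ((s - 3) / 2) * (1 + η ^ 4) ^ (-(1 / 4 - ν)) := by
      rw [hη4, Real.mul_rpow (by positivity) (by positivity), ← Real.rpow_natCast,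
        ← Real.rpow_mul hξ0.le]
      congr 2
      · push_cast
        ring
      · rw [hν]
        ring
    rw [hexp]
    calc |ξ₂| ^ ((s - 3) / 2) * (d * mixG ν η)
        ≤ |ξ₂| ^ ((s - 3) / 2) * (d * (C * (1 + η ^ 4) ^ (-(1 / 4 - ν)))) := by
          gcongr
          exact hG η
      _ = _ := by ring
end

section
/- For all z, ζ ∈ ℂ and all θ ∈ ℝ, the identity ω(π_{V_θ}(z), z) − ω(π_{V_θ}(ζ), ζ) = ω(z, ζ) + ω(π_{V_θ}(z+ζ), z−ζ) holds, where ω(z,ζ) = Im(z·conj(ζ)) and π_{V_θ}(w) = ⟨w, e^{iθ}⟩ e^{iθ} is the orthogonal projection of ℝ² ≅ ℂ onto the line spanned by e^{iθ} (with ⟨·,·⟩ the real inner product on ℂ ≅ ℝ², ⟨w, v⟩ = Re(w·conj(v))). -/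
/-!
Bilinearity of `ω` and linearity of the projection `P = π_{V_θ}` reduce the identity to
`ω(P z, ζ) + ω(z, P ζ) = ω(z, ζ)`. In the plane the left side equals `tr(P) ω(z, ζ)`, and `tr P = 1`
because `P` has rank one. In coordinates, the trace is `cos² θ + sin² θ`.
-/

open scoped Real

/-- The symplectic form `ω(a,b) = Im (a * conj b)` on `ℂ ≅ ℝ²`. -/
noncomputable def omegaForm (a b : ℂ) : ℝ := (a * (starRingEnd ℂ) b).im

/-- Orthogonal projection of `ℝ² ≅ ℂ` onto the line spanned by `e^{iθ}`:
`π_{V_θ}(w) = ⟨w, e^{iθ}⟩ e^{iθ}` with `⟨w,v⟩ = Re (w * conj v)`. -/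
noncomputable def projLine (θ : ℝ) (w : ℂ) : ℂ :=
  (((w * (starRingEnd ℂ) (Complex.exp (θ * Complex.I))).re : ℝ) : ℂ) *
    Complex.exp (θ * Complex.I)

/-- The identity `ω(π_{V_θ}(z), z) - ω(π_{V_θ}(ζ), ζ) = ω(z,ζ) + ω(π_{V_θ}(z+ζ), z-ζ)`. -/
theorem omega_proj_identity (z ζ : ℂ) (θ : ℝ) :
    omegaForm (projLine θ z) z - omegaForm (projLine θ ζ) ζ =
      omegaForm z ζ + omegaForm (projLine θ (z + ζ)) (z - ζ) := by
  have hre : (Complex.exp (θ * Complex.I)).re = Real.cos θ := Complex.exp_ofReal_mul_I_re θ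
  have him : (Complex.exp (θ * Complex.I)).im = Real.sin θ := Complex.exp_ofReal_mul_I_im θ
  simp only [omegaForm, projLine, Complex.mul_im, Complex.mul_re, Complex.conj_re, Complex.conj_im,
    Complex.ofReal_re, Complex.ofReal_im, Complex.add_re, Complex.add_im, Complex.sub_re,
    Complex.sub_im, hre, him]
  -- The two sides differ by `ω(z, ζ) * (cos² θ + sin² θ - 1)`.
  linear_combination (z.im * ζ.re - z.re * ζ.im) * Real.sin_sq_add_cos_sq θ
end
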